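/- For every n ≥ 2, the n-th symmetrized topological complexity of the real projective plane equals 2n+1: TC^Σ_n(ℝP^2) = 2n+1. -/

import Mathlib

open unitInterval

noncomputable section

/-- The point `j/(n-1)` of the unit interval, for `j : Fin n`.
These are the `n` evaluation points `0, 1/(n-1), …, (n-2)/(n-1), 1`. -/
def evalPt (n : ℕ) (j : Fin n) : unitInterval :=
  ⟨(j : ℝ) / ((n : ℝ) - 1), by
    have hn : 1 ≤ n := j.pos
    rcases eq_or_lt_of_le hn with h | h
    · have hn1 : n = 1 := h.symm
      subst hn1
      simp [Fin.fin_one_eq_zero j]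
    · have h1 : (0 : ℝ) < (n : ℝ) - 1 := by
        have : (1 : ℝ) < (n : ℝ) := by exact_mod_cast h
        linarith
      constructor
      · exact div_nonneg (Nat.cast_nonneg _) h1.le
      · rw [div_le_one h1]
        have hj : (j : ℕ) + 1 ≤ n := j.is_lt
        have : ((j : ℕ) : ℝ) + 1 ≤ (n : ℝ) := by exact_mod_cast hj
        linarith⟩

/-- Coordinate reversal (the involution `β`) on `n`-tuples:
`β·(x_1,…,x_n) = (x_n,…,x_1)`. -/
def rtuple {X : Type*} {n : ℕ} (x : Fin n → X) : Fin n → X := fun j => x j.rev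

/-- Path reversal (the involution `β`) on the free path space `C(I,X)`:
`(β·γ)(t) = γ(1-t)`. -/
def rpath {X : Type*} [TopologicalSpace X] (γ : C(unitInterval, X)) : C(unitInterval, X) :=
  γ.comp ⟨unitInterval.symm, unitInterval.continuous_symm⟩

/-- `X^n` can be covered by `k` open sets, on each of which there is a continuous
section of the evaluation map `e_n : C(I,X) → X^n`,
`γ ↦ (γ(0), γ(1/(n-1)), …, γ(1))`. -/
def HasPlanners (X : Type*) [TopologicalSpace X] (n k : ℕ) : Prop :=
  ∃ U : Fin k → Set (Fin n → X),
    (∀ i, IsOpen (U i)) ∧ (⋃ i, U i) = Set.univ ∧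
    (∀ i, ∃ s : C(U i, C(unitInterval, X)),
      ∀ x : U i, ∀ j : Fin n, s x (evalPt n j) = (x : Fin n → X) j)

/-- The `n`-th (ordinary, higher) topological complexity `TC_n(X)`, as a value in `ℕ∞`. -/
def TCn (X : Type*) [TopologicalSpace X] (n : ℕ) : ℕ∞ :=
  sInf {k : ℕ∞ | ∃ m : ℕ, (m : ℕ∞) = k ∧ HasPlanners X n m}

/-- `X^n` can be covered by `k` β-invariant open sets, on each of which there is a
continuous β-equivariant section of the evaluation map `e_n : C(I,X) → X^n`
(a bidirectional motion planner). -/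
def HasBidirPlanners (X : Type*) [TopologicalSpace X] (n k : ℕ) : Prop :=
  ∃ U : Fin k → Set (Fin n → X),
    (∀ i, IsOpen (U i)) ∧ (⋃ i, U i) = Set.univ ∧
    (∀ i, ∀ x ∈ U i, rtuple x ∈ U i) ∧
    (∀ i, ∃ s : C(U i, C(unitInterval, X)),
      (∀ x : U i, ∀ j : Fin n, s x (evalPt n j) = (x : Fin n → X) j) ∧
      (∀ x : U i, ∀ hx : rtuple (x : Fin n → X) ∈ U i,
        s ⟨rtuple (x : Fin n → X), hx⟩ = rpath (s x)))

/-- The `n`-th bidirectional topological complexity `TC^β_n(X)`, as a value in `ℕ∞`. -/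
def TCbeta (X : Type*) [TopologicalSpace X] (n : ℕ) : ℕ∞ :=
  sInf {k : ℕ∞ | ∃ m : ℕ, (m : ℕ∞) = k ∧ HasBidirPlanners X n m}

/-- The action of a permutation `sg ∈ Σ_n` on `n`-tuples (by permuting coordinates). -/
def permTuple {X : Type*} {n : ℕ} (sg : Equiv.Perm (Fin n)) (x : Fin n → X) : Fin n → X :=
  fun j => x (sg j)

/-- `X^n` can be covered by `k` `Σ_n`-invariant open sets, on each of which there is a
continuous `Σ_n`-equivariant section of `E_n : X^{J_n} → X^n`,
`(α_1,…,α_n) ↦ (α_1(1),…,α_n(1))`, where `X^{J_n}` is the space of `n`-tuples of paths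
with a common initial point. -/
def HasSymPlanners (X : Type*) [TopologicalSpace X] (n k : ℕ) : Prop :=
  ∃ U : Fin k → Set (Fin n → X),
    (∀ i, IsOpen (U i)) ∧ (⋃ i, U i) = Set.univ ∧
    (∀ i, ∀ sg : Equiv.Perm (Fin n), ∀ x ∈ U i, permTuple sg x ∈ U i) ∧
    (∀ i, ∃ s : C(U i, Fin n → C(unitInterval, X)),
      (∀ x : U i, ∀ j j' : Fin n, s x j 0 = s x j' 0) ∧
      (∀ x : U i, ∀ j : Fin n, s x j 1 = (x : Fin n → X) j) ∧
      (∀ x : U i, ∀ sg : Equiv.Perm (Fin n),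
        ∀ hx : permTuple sg (x : Fin n → X) ∈ U i,
        s ⟨permTuple sg (x : Fin n → X), hx⟩ = permTuple sg (s x)))

/-- The `n`-th symmetrized topological complexity `TC^Σ_n(X)`, as a value in `ℕ∞`. -/
def TCsym (X : Type*) [TopologicalSpace X] (n : ℕ) : ℕ∞ :=
  sInf {k : ℕ∞ | ∃ m : ℕ, (m : ℕ∞) = k ∧ HasSymPlanners X n m}

/-- The unit sphere `S^m ⊂ ℝ^{m+1}`. -/
abbrev Sph (m : ℕ) : Type :=
  Metric.sphere (0 : EuclideanSpace ℝ (Fin (m + 1))) 1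

end
noncomputable section

/-- The antipodal setoid on the sphere `S^m`, identifying `x` with `-x`. -/
def antipodalSetoid (m : ℕ) : Setoid (Sph m) where
  r x y := (x : EuclideanSpace ℝ (Fin (m + 1))) = (y : EuclideanSpace ℝ (Fin (m + 1))) ∨
    (x : EuclideanSpace ℝ (Fin (m + 1))) = -(y : EuclideanSpace ℝ (Fin (m + 1)))
  iseqv := by
    constructor
    · intro x; exact Or.inl rfl
    · intro x y h
      rcases h with h | h
      · exact Or.inl h.symm
      · exact Or.inr (by rw [h, neg_neg])
    · intro x y z h1 h2
      rcases h1 with h1 | h1 <;> rcases h2 with h2 | h2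
      · exact Or.inl (h1.trans h2)
      · exact Or.inr (h1.trans h2)
      · exact Or.inr (by rw [h1, h2])
      · exact Or.inl (by rw [h1, h2, neg_neg])

/-- Real projective `m`-space, the quotient of the unit sphere `S^m ⊂ ℝ^{m+1}`
by the antipodal involution. -/
def RP (m : ℕ) : Type := Quotient (antipodalSetoid m)

instance (m : ℕ) : TopologicalSpace (RP m) := instTopologicalSpaceQuotient

end

open unitInterval
namespace TCGrid
open Finset

section Abstract
variable {P ι : Type*} [Fintype ι]

/-- invariance of a function of vertex sequences under a set of transformations -/
def Inv (T : Set (P → P)) (Θ : (ℕ → P) → ZMod 2) : Prop :=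
  ∀ t ∈ T, ∀ v : ℕ → P, Θ (fun k => t (v k)) = Θ v

/-- independence of the `j`-th vertex -/
def Ind (m j : ℕ) (Θ : (ℕ → P) → ZMod 2) : Prop :=
  ∀ v w : ℕ → P, (∀ k, k ≠ j ∧ k ≤ m → v k = w k) → Θ v = Θ w

/-- the cycle property -/
def Cyc (T : Set (P → P)) (m : ℕ) (ω : ι → ZMod 2) (vt : ι → ℕ → P) : Prop :=
  ∀ Θ, Inv T Θ → ∀ j ≤ m, Ind m j Θ → ∑ Ix, ω Ix * Θ (vt Ix) = 0

/-- the cup product evaluated on the cycle -/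
def cupS (m : ℕ) (ω : ι → ZMod 2) (vt : ι → ℕ → P) (g : ℕ → P → ZMod 2) : ZMod 2 :=
  ∑ Ix, ω Ix * ∏ i ∈ range m, (g i (vt Ix i) + g i (vt Ix (i + 1)))

theorem left_zero {T : Set (P → P)} {m : ℕ} {ω : ι → ZMod 2} {vt : ι → ℕ → P}
    (hc : Cyc T m ω vt) (g : ℕ → P → ZMod 2) (h : P → ZMod 2)
    (hg : ∀ t ∈ T, ∀ i, ∀ p q, g i (t p) + g i (t q) = g i p + g i q)
    (hh : ∀ t ∈ T, ∀ p, h (t p) = h p) (k : ℕ) (hk : k < m) :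
    ∀ j ≤ k, ∑ Ix, ω Ix * ((∏ i ∈ range j, (g i (vt Ix i) + g i (vt Ix (i + 1)))) *
      (∏ i ∈ Ico j k, (g i (vt Ix (i + 1)) + g i (vt Ix (i + 2)))) * h (vt Ix (k + 1)) *
      ∏ i ∈ Ico (k + 1) m, (g i (vt Ix i) + g i (vt Ix (i + 1)))) = 0 := by
  intro j
  induction j with
  | zero =>
    intro _
    refine hc (fun v => (∏ i ∈ range 0, (g i (v i) + g i (v (i + 1)))) *
      (∏ i ∈ Ico 0 k, (g i (v (i + 1)) + g i (v (i + 2)))) * h (v (k + 1)) *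
      ∏ i ∈ Ico (k + 1) m, (g i (v i) + g i (v (i + 1)))) ?_ 0 (Nat.zero_le _) ?_
    · intro t ht v
      simp only [hg t ht, hh t ht]
    · intro v w hvw
      simp only [range_zero, prod_empty]
      rw [hvw (k + 1) (by omega)]
      congr 1
      · congr 1
        congr 1
        apply prod_congr rfl
        intro i hi
        rw [mem_Ico] at hi
        rw [hvw (i + 1) (by omega), hvw (i + 2) (by omega)]
      · apply prod_congr rfl
        intro i hi
        rw [mem_Ico] at hi
        rw [hvw i (by omega), hvw (i + 1) (by omega)]
  | succ j ih =>
    intro hj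
    have e1 := ih (by omega)
    have e2 := hc (fun v => (∏ i ∈ range j, (g i (v i) + g i (v (i + 1)))) *
      (g j (v j) + g j (v (j + 2))) *
      (∏ i ∈ Ico (j + 1) k, (g i (v (i + 1)) + g i (v (i + 2)))) * h (v (k + 1)) *
      ∏ i ∈ Ico (k + 1) m, (g i (v i) + g i (v (i + 1)))) ?_ (j + 1) (by omega) ?_
    · rw [← e1, ← sub_eq_zero, ← sum_sub_distrib]
      rw [← e2]
      apply sum_congr rfl
      intro Ix _
      rw [prod_range_succ, prod_eq_prod_Ico_succ_bot (show j < k by omega), CharTwo.sub_eq_add]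
      have : g j (vt Ix (j + 1)) + g j (vt Ix (j + 1)) = 0 := CharTwo.add_self_eq_zero _
      linear_combination (ω Ix * (∏ i ∈ range j, (g i (vt Ix i) + g i (vt Ix (i + 1)))) *
        (∏ i ∈ Ico (j + 1) k, (g i (vt Ix (i + 1)) + g i (vt Ix (i + 2)))) * h (vt Ix (k + 1)) *
        ∏ i ∈ Ico (k + 1) m, (g i (vt Ix i) + g i (vt Ix (i + 1)))) * this
    · intro t ht v
      simp only [hg t ht, hh t ht]
    · intro v w hvw
      simp only
      rw [hvw j (by omega), hvw (j + 2) (by omega), hvw (k + 1) (by omega)]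
      congr 1
      · congr 1
        congr 1
        · congr 1
          apply prod_congr rfl
          intro i hi
          rw [mem_range] at hi
          rw [hvw i (by omega), hvw (i + 1) (by omega)]
        · apply prod_congr rfl
          intro i hi
          rw [mem_Ico] at hi
          rw [hvw (i + 1) (by omega), hvw (i + 2) (by omega)]
      · apply prod_congr rfl
        intro i hi
        rw [mem_Ico] at hi
        rw [hvw i (by omega), hvw (i + 1) (by omega)]

theorem right_zero {T : Set (P → P)} {m : ℕ} {ω : ι → ZMod 2} {vt : ι → ℕ → P}
    (hc : Cyc T m ω vt) (g : ℕ → P → ZMod 2) (h : P → ZMod 2)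
    (hg : ∀ t ∈ T, ∀ i, ∀ p q, g i (t p) + g i (t q) = g i p + g i q)
    (hh : ∀ t ∈ T, ∀ p, h (t p) = h p) (k : ℕ) (hk : k < m) :
    ∀ d, ∀ j, j + d = m → k + 1 ≤ j → 
     ∑ Ix, ω Ix * ((∏ i ∈ range k, (g i (vt Ix i) + g i (vt Ix (i + 1)))) * h (vt Ix k) *
      (∏ i ∈ Ico (k + 1) j, (g i (vt Ix (i - 1)) + g i (vt Ix i))) * 
      ∏ i ∈ Ico j m, (g i (vt Ix i) + g i (vt Ix (i + 1)))) = 0 := by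
  intro d
  induction d with
  | zero =>
    intro j hj hkj
    obtain rfl : j = m := by omega
    refine hc (fun v => (∏ i ∈ range k, (g i (v i) + g i (v (i + 1)))) * h (v k) *
      (∏ i ∈ Ico (k + 1) j, (g i (v (i - 1)) + g i (v i))) * 
      ∏ i ∈ Ico j j, (g i (v i) + g i (v (i + 1)))) ?_ j le_rfl ?_
    · intro t ht v
      simp only [hg t ht, hh t ht]
    · intro v w hvw
      simp only [Ico_self, prod_empty, mul_one]
      rw [hvw k (by omega)]
      congr 1
      · congr 1
        apply prod_congr rfl
        intro i hi
        rw [mem_range] at hi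
        rw [hvw i (by omega), hvw (i + 1) (by omega)]
      · apply prod_congr rfl
        intro i hi
        rw [mem_Ico] at hi
        rw [hvw (i - 1) (by omega), hvw i (by omega)]
  | succ d ih =>
    intro j hj hkj
    have e1 := ih (j + 1) (by omega) (by omega)
    have e2 := hc (fun v => (∏ i ∈ range k, (g i (v i) + g i (v (i + 1)))) * h (v k) *
      (∏ i ∈ Ico (k + 1) j, (g i (v (i - 1)) + g i (v i))) * 
      (g j (v (j - 1)) + g j (v (j + 1))) *
      ∏ i ∈ Ico (j + 1) m, (g i (v i) + g i (v (i + 1)))) ?_ j (by omega) ?_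
    · rw [← e1, ← sub_eq_zero, ← sum_sub_distrib]
      rw [← e2]
      apply sum_congr rfl
      intro Ix _
      rw [prod_Ico_succ_top (by omega), prod_eq_prod_Ico_succ_bot (show j < m by omega),
        CharTwo.sub_eq_add]
      have : g j (vt Ix j) + g j (vt Ix j) = 0 := CharTwo.add_self_eq_zero _
      linear_combination (ω Ix * (∏ i ∈ range k, (g i (vt Ix i) + g i (vt Ix (i + 1)))) *
        h (vt Ix k) * (∏ i ∈ Ico (k + 1) j, (g i (vt Ix (i - 1)) + g i (vt Ix i))) *
        ∏ i ∈ Ico (j + 1) m, (g i (vt Ix i) + g i (vt Ix (i + 1)))) * this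
    · intro t ht v
      simp only [hg t ht, hh t ht]
    · intro v w hvw
      simp only
      rw [hvw (j - 1) (by omega), hvw (j + 1) (by omega), hvw k (by omega)]
      congr 1
      · congr 1
        congr 1
        · congr 1
          apply prod_congr rfl
          intro i hi
          rw [mem_range] at hi
          rw [hvw i (by omega), hvw (i + 1) (by omega)]
        · apply prod_congr rfl
          intro i hi
          rw [mem_Ico] at hi
          rw [hvw (i - 1) (by omega), hvw i (by omega)]
      · apply prod_congr rfl
        intro i hi
        rw [mem_Ico] at hi
        rw [hvw i (by omega), hvw (i + 1) (by omega)]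

theorem cup_zero {T : Set (P → P)} {m : ℕ} {ω : ι → ZMod 2} {vt : ι → ℕ → P}
    (hc : Cyc T m ω vt) (g : ℕ → P → ZMod 2) (h : P → ZMod 2)
    (hg : ∀ t ∈ T, ∀ i, ∀ p q, g i (t p) + g i (t q) = g i p + g i q)
    (hh : ∀ t ∈ T, ∀ p, h (t p) = h p) (k : ℕ) (hk : k < m) :
    ∑ Ix, ω Ix * ((∏ i ∈ range k, (g i (vt Ix i) + g i (vt Ix (i + 1)))) *
      (h (vt Ix k) + h (vt Ix (k + 1))) *
      ∏ i ∈ Ico (k + 1) m, (g i (vt Ix i) + g i (vt Ix (i + 1)))) = 0 := by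
  have e1 := left_zero hc g h hg hh k hk k le_rfl
  have e2 := right_zero hc g h hg hh k hk (m - (k + 1)) (k + 1) (by omega) le_rfl
  simp only [Ico_self, prod_empty, mul_one] at e1 e2
  have := congrArg₂ (· + ·) e1 e2
  simp only [add_zero] at this
  rw [← this, ← sum_add_distrib]
  apply sum_congr rfl
  intro Ix _
  ring

theorem cupS_step {T : Set (P → P)} {m : ℕ} {ω : ι → ZMod 2} {vt : ι → ℕ → P}
    (hc : Cyc T m ω vt) (g g' : ℕ → P → ZMod 2) (k : ℕ) (hk : k < m)
    (hg : ∀ t ∈ T, ∀ i, ∀ p q, g i (t p) + g i (t q) = g i p + g i q)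
    (heq : ∀ i, i ≠ k → g i = g' i)
    (hh : ∀ t ∈ T, ∀ p, g k (t p) + g' k (t p) = g k p + g' k p) :
    cupS m ω vt g = cupS m ω vt g' := by
  have e := cup_zero hc g (fun p => g k p + g' k p) hg hh k hk
  rw [← sub_eq_zero, ← e, cupS, cupS, ← sum_sub_distrib]
  apply sum_congr rfl
  intro Ix _
  have split : ∀ F : ℕ → ZMod 2, ∏ i ∈ range m, F i
      = (∏ i ∈ range k, F i) * F k * ∏ i ∈ Ico (k + 1) m, F i := by
    intro F
    rw [← prod_range_succ, prod_range_mul_prod_Ico _ (by omega)]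
  rw [split, split]
  have a1 : ∏ i ∈ range k, (g' i (vt Ix i) + g' i (vt Ix (i + 1))) = 
      ∏ i ∈ range k, (g i (vt Ix i) + g i (vt Ix (i + 1))) := by
    apply prod_congr rfl
    intro i hi
    rw [mem_range] at hi
    rw [heq i (by omega)]
  have a2 : ∏ i ∈ Ico (k + 1) m, (g' i (vt Ix i) + g' i (vt Ix (i + 1))) = 
      ∏ i ∈ Ico (k + 1) m, (g i (vt Ix i) + g i (vt Ix (i + 1))) := by
    apply prod_congr rfl
    intro i hi
    rw [mem_Ico] at hi
    rw [heq i (by omega)]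
  rw [a1, a2, CharTwo.sub_eq_add]
  ring

theorem cupS_inv {T : Set (P → P)} {m : ℕ} {ω : ι → ZMod 2} {vt : ι → ℕ → P}
    (hc : Cyc T m ω vt) (g g' : ℕ → P → ZMod 2)
    (hg : ∀ t ∈ T, ∀ i, ∃ c, ∀ p, g i (t p) = g i p + c ∧ g' i (t p) = g' i p + c) :
    cupS m ω vt g = cupS m ω vt g' := by
  have key : ∀ r ≤ m, cupS m ω vt g = cupS m ω vt (fun i => if i < r then g' i else g i) := by
    intro r
    induction r with
    | zero => intro _; simp
    | succ r ih =>
      intro hr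
      rw [ih (by omega)]
      refine cupS_step hc _ _ r (by omega) ?_ ?_ ?_
      · intro t ht i p q
        obtain ⟨c, hc⟩ := hg t ht i
        have h2 : c + c = 0 := CharTwo.add_self_eq_zero _
        by_cases h : i < r
        · simp only [h, if_true, (hc _).2]; linear_combination h2
        · simp only [h, if_false, (hc _).1]; linear_combination h2
      · intro i hi
        have : i < r ↔ i < r + 1 := by omega
        simp only [this]
      · intro t ht p
        obtain ⟨c, hc⟩ := hg t ht r
        have h2 : c + c = 0 := CharTwo.add_self_eq_zero _
        simp only [lt_irrefl, if_false, Nat.lt_succ_self, if_true, (hc _).1, (hc _).2]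
        linear_combination h2
  rw [key m le_rfl]
  unfold cupS
  apply sum_congr rfl
  intro Ix _
  congr 1
  apply prod_congr rfl
  intro i hi
  rw [mem_range] at hi
  simp [hi]

end Abstract
end TCGrid

open unitInterval
namespace TCGrid
open Finset

/-- coordinates: block index and `u`/`v` -/
abbrev Co (n : ℕ) := Fin n × Fin 2
/-- grid points -/
abbrev Pt (n : ℕ) := Co n → ℤ
/-- top simplices -/
abbrev Idx (n M : ℕ) := (Co n → ZMod M) × (Co n → ℤˣ) × (Fin (2 * n) ≃ Co n)

/-- the vertices of a top simplex -/
def vert {n M : ℕ} (Ix : Idx n M) (k : ℕ) : Pt n := fun c =>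
  2 * ((Ix.1 c).val : ℤ) + if ((Ix.2.2.symm c : Fin (2 * n)) : ℕ) < k then ((Ix.2.1 c : ℤˣ) : ℤ) else 0

/-- glide reflection -/
def actA {n : ℕ} (N : ℤ) (b : Fin n) (p : Pt n) : Pt n := fun c =>
  if c = (b, 0) then p c + N else if c = (b, 1) then - p c else p c

/-- translation -/
def actB {n : ℕ} (N : ℤ) (b : Fin n) (p : Pt n) : Pt n := fun c =>
  if c = (b, 1) then p c + N else p c

/-- block transformations -/
def blockT (n : ℕ) (N : ℤ) : Set (Pt n → Pt n) :=
  {t | ∃ b, t = actA N b ∨ t = actB N b}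

theorem sum_invol {ι : Type*} [Fintype ι] [DecidableEq ι] (f : ι → ZMod 2) (τ : ι → ι)
    (h1 : ∀ a, f (τ a) = f a) (h2 : ∀ a, τ a ≠ a) (h3 : ∀ a, τ (τ a) = a) : ∑ a, f a = 0 :=
  Finset.sum_involution (fun a _ => τ a)
    (fun a _ => by rw [h1]; exact CharTwo.add_self_eq_zero _) (fun a _ _ => h2 a)
    (fun a _ => mem_univ _) (fun a _ => h3 a)

section
set_option linter.unusedSectionVars false
variable {n M : ℕ} [NeZero M]

noncomputable instance : DecidableEq (Idx n M) := Classical.decEq _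

/-- transposition of two positions -/
def swp (a b : Fin (2 * n)) (Ix : Idx n M) : Idx n M :=
  (Ix.1, Ix.2.1, (Equiv.swap a b).trans Ix.2.2)

theorem swp_swp (a b : Fin (2 * n)) (Ix : Idx n M) : swp a b (swp a b Ix) = Ix := by
  obtain ⟨x, s, π⟩ := Ix
  simp only [swp, Prod.mk.injEq, true_and]
  ext i : 1
  simp

theorem swp_ne {a b : Fin (2 * n)} (hab : a ≠ b) (Ix : Idx n M) : swp a b Ix ≠ Ix := by
  obtain ⟨x, s, π⟩ := Ix
  intro h
  simp only [swp, Prod.mk.injEq, true_and] at h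
  have := congrArg (fun e : Fin (2 * n) ≃ Co n => e a) h
  simp at this
  exact hab this.symm

theorem vert_swp {j : ℕ} (hj : 1 ≤ j) (hj' : j < 2 * n) (Ix : Idx n M) (k : ℕ) (hk : k ≠ j) :
    vert (swp ⟨j - 1, by omega⟩ ⟨j, hj'⟩ Ix) k = vert Ix k := by
  obtain ⟨x, s, π⟩ := Ix
  funext c
  simp only [vert, swp, Equiv.symm_trans_apply, Equiv.symm_swap]
  have : ((Equiv.swap (⟨j - 1, by omega⟩ : Fin (2 * n)) ⟨j, hj'⟩ (π.symm c) : Fin (2 * n)) : ℕ) < k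
      ↔ ((π.symm c : Fin (2 * n)) : ℕ) < k := by
    rw [Equiv.swap_apply_def]
    split_ifs with h1 h2
    · rw [h1]; simp only; omega
    · rw [h2]; simp only; omega
    · rfl
  simp only [this]

/-- sign flip -/
def flipS (c : Co n) (s : Co n → ℤˣ) : Co n → ℤˣ := Function.update s c (- s c)

theorem flipS_flipS (c : Co n) (s : Co n → ℤˣ) : flipS c (flipS c s) = s := by
  unfold flipS; simp

theorem units_ne_neg (a : ℤˣ) : -a ≠ a := by
  rcases Int.units_eq_one_or a with h | h <;> subst h <;> decide

theorem flipS_ne (c : Co n) (s : Co n → ℤˣ) : flipS c s ≠ s := by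
  intro h
  have := congrFun h c
  simp only [flipS, Function.update_self] at this
  exact units_ne_neg _ this

/-- cycle property at the last vertex -/
theorem cyc_last (ω : (Fin (2 * n) ≃ Co n) → ZMod 2) (hn : 0 < n) (Θ : (ℕ → Pt n) → ZMod 2)
    (hΘ : Ind (2 * n) (2 * n) Θ) :
    ∑ Ix : Idx n M, ω Ix.2.2 * Θ (vert Ix) = 0 := by
  let l : Fin (2 * n) := ⟨2 * n - 1, by omega⟩
  refine sum_invol _ (fun Ix => (Ix.1, flipS (Ix.2.2 l) Ix.2.1, Ix.2.2)) ?_ ?_ ?_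
  · intro Ix
    simp only
    congr 1
    apply hΘ
    intro k hk
    obtain ⟨x, s, π⟩ := Ix
    funext c
    simp only [vert, flipS]
    by_cases hc : c = π l
    · subst hc
      simp only [Equiv.symm_apply_apply]
      have : ¬ ((l : ℕ) < k) := by simp only [l]; omega
      simp [this]
    · rw [Function.update_of_ne hc]
  · intro Ix h
    have := congrArg (fun J : Idx n M => J.2.1) h
    exact flipS_ne _ _ this
  · intro Ix
    simp only [flipS_flipS]

theorem cyc_mid (ω : (Fin (2 * n) ≃ Co n) → ZMod 2) (j : ℕ) (hj : 1 ≤ j) (hj' : j < 2 * n)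
    (hω : ∀ π, ω ((Equiv.swap ⟨j - 1, by omega⟩ ⟨j, hj'⟩).trans π) = ω π)
    (Θ : (ℕ → Pt n) → ZMod 2) (hΘ : Ind (2 * n) j Θ) :
    ∑ Ix : Idx n M, ω Ix.2.2 * Θ (vert Ix) = 0 := by
  refine sum_invol _ (swp ⟨j - 1, by omega⟩ ⟨j, hj'⟩) ?_ ?_ (swp_swp _ _)
  · intro Ix
    rw [hΘ _ _ (fun k hk => vert_swp hj hj' Ix k hk.1)]
    simp only [swp, hω]
  · intro Ix
    apply swp_ne
    simp only [ne_eq, Fin.mk.injEq]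
    omega

/-- negate a coordinate -/
def negX {R : Type*} [Neg R] (c : Co n) (x : Co n → R) : Co n → R := Function.update x c (-x c)

/-- whether the seam is crossed -/
def seam (c : Co n) (x : Co n → ZMod M) (s : Co n → ℤˣ) : Prop :=
  c.2 = 0 ∧ ((s c = 1 ∧ x c = -1) ∨ (s c = -1 ∧ x c = 0))

open Classical in
/-- the move at vertex zero -/
noncomputable def move0 (c : Co n) (x : Co n → ZMod M) (s : Co n → ℤˣ) :
    (Co n → ZMod M) × (Co n → ℤˣ) :=
  let x' := Function.update x c (x c + ((s c : ℤ) : ZMod M))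
  let s' := flipS c s
  if seam c x s then (negX (c.1, 1) x', negX (c.1, 1) s') else (x', s')

theorem move0_s (c : Co n) (x : Co n → ZMod M) (s : Co n → ℤˣ) :
    (move0 c x s).2 c = - s c := by
  unfold move0
  by_cases h : seam c x s
  · simp only [h, if_true, negX]
    have : c ≠ (c.1, 1) := by
      intro e; have := congrArg Prod.snd e; rw [h.1] at this; simp at this
    rw [Function.update_of_ne this]
    simp [flipS]
  · simp [h, flipS]

theorem move0_x (c : Co n) (x : Co n → ZMod M) (s : Co n → ℤˣ) :
    (move0 c x s).1 c = x c + ((s c : ℤ) : ZMod M) := by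
  unfold move0
  by_cases h : seam c x s
  · simp only [h, if_true, negX]
    have : c ≠ (c.1, 1) := by
      intro e; have := congrArg Prod.snd e; rw [h.1] at this; simp at this
    rw [Function.update_of_ne this]
    simp
  · simp [h]

theorem seam_move0 (c : Co n) (x : Co n → ZMod M) (s : Co n → ℤˣ) :
    seam c (move0 c x s).1 (move0 c x s).2 ↔ seam c x s := by
  unfold seam
  rw [move0_s, move0_x]
  rcases Int.units_eq_one_or (s c) with h | h
  · simp [h, eq_neg_iff_add_eq_zero, (by decide : (-1 : ℤˣ) ≠ 1), (by decide : (1 : ℤˣ) ≠ -1)]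
  · simp [h, eq_neg_iff_add_eq_zero, (by decide : (-1 : ℤˣ) ≠ 1), (by decide : (1 : ℤˣ) ≠ -1)]

open Classical in
theorem move0_move0 (c : Co n) (x : Co n → ZMod M) (s : Co n → ℤˣ) :
    move0 c (move0 c x s).1 (move0 c x s).2 = (x, s) := by
  have h0 := seam_move0 c x s
  have h1 := move0_s c x s
  have h2 := move0_x c x s
  set y := (move0 c x s).1 with hy
  set t := (move0 c x s).2 with ht
  have hcc : seam c x s → c ≠ (c.1, 1) := by
      intro h e; have := congrArg Prod.snd e; rw [h.1] at this; simp at this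
  have e : move0 c y t = (if seam c x s then
     (negX (c.1, 1) (Function.update y c (x c)), negX (c.1, 1) (flipS c t)) else
     (Function.update y c (x c), flipS c t)) := by
    unfold move0
    simp only [h0, h1, h2]
    simp
  rw [e]
  by_cases h : seam c x s
  · have hne := hcc h
    simp only [h, if_true]
    have hy' : y = negX (c.1, 1) (Function.update x c (x c + ((s c : ℤ) : ZMod M))) := by
      rw [hy]; unfold move0; simp [h]
    have ht' : t = negX (c.1, 1) (flipS c s) := by
      rw [ht]; unfold move0; simp [h]
    rw [hy', ht']
    ext d
    · simp only [negX, Function.update_apply]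
      split_ifs <;> simp_all
    · simp only [negX, flipS, Function.update_apply]
      split_ifs <;> simp_all
  · simp only [h, if_false]
    have hy' : y = (Function.update x c (x c + ((s c : ℤ) : ZMod M))) := by
      rw [hy]; unfold move0; simp [h]
    have ht' : t = (flipS c s) := by
      rw [ht]; unfold move0; simp [h]
    rw [hy', ht', flipS_flipS]
    simp

theorem val_succ' (a : ZMod M) (h : a.val + 1 < M) : (a + 1).val = a.val + 1 := by
  have : Fact (1 < M) := ⟨by omega⟩
  rw [ZMod.val_add_of_lt] <;> rw [ZMod.val_one]
  exact h

theorem val_succ_cases (a : ZMod M) :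
    (a ≠ -1 ∧ ((a + 1).val : ℤ) = a.val + 1) ∨ (a = -1 ∧ ((a + 1).val : ℤ) = 0 ∧ (a.val : ℤ) = M - 1) := by
  by_cases h : a = -1
  · right
    subst h
    refine ⟨rfl, by simp, ?_⟩
    have : M ≠ 0 := NeZero.ne M
    obtain ⟨k, rfl⟩ := Nat.exists_eq_succ_of_ne_zero this
    rw [ZMod.val_neg_one]
    push_cast; ring
  · left
    refine ⟨h, ?_⟩
    have h1 : a.val + 1 < M := by
      have := ZMod.val_lt a
      by_contra hc
      have e : a.val + 1 = M := by omega
      apply h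
      rw [eq_neg_iff_add_eq_zero]
      have : ((a.val + 1 : ℕ) : ZMod M) = 0 := by rw [e]; simp
      rw [Nat.cast_add, ZMod.natCast_zmod_val] at this
      simpa using this
    have : (a + 1).val = a.val + 1 := val_succ' a h1
    rw [this]; push_cast; ring

theorem val_neg_cases (a : ZMod M) :
    (a = 0 ∧ ((-a).val : ℤ) = 0 ∧ (a.val : ℤ) = 0) ∨ (((-a).val : ℤ) = M - a.val) := by
  by_cases h : a = 0
  · left; subst h; simp
  · right
    rw [ZMod.neg_val, if_neg h]
    have := ZMod.val_lt a
    push_cast [this.le]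
    rfl

theorem move0_Θ (Θ : (ℕ → Pt n) → ZMod 2) (hi : Inv (blockT n (2 * M)) Θ) (h0 : Ind (2 * n) 0 Θ)
    (hn : 0 < 2 * n)
    (x : Co n → ZMod M) (s : Co n → ℤˣ) (π : Fin (2 * n) ≃ Co n) (hs : s (π ⟨0, hn⟩) = 1) :
    Θ (vert (move0 (π ⟨0, hn⟩) x s |>.1, move0 (π ⟨0, hn⟩) x s |>.2, π)) = Θ (vert (x, s, π)) := by
  set c := π ⟨0, hn⟩ with hc
  have hc0 : ∀ k, k ≠ 0 → ((π.symm c : Fin (2 * n)) : ℕ) < k := by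
    intro k hk; rw [hc]; simp; omega
  have hA : ∀ b, ∀ v : ℕ → Pt n, Θ (fun k => actA (2 * M) b (v k)) = Θ v :=
    fun b v => hi _ ⟨b, Or.inl rfl⟩ v
  have hB : ∀ b, ∀ v : ℕ → Pt n, Θ (fun k => actB (2 * M) b (v k)) = Θ v :=
    fun b v => hi _ ⟨b, Or.inr rfl⟩ v
  by_cases hseam : seam c x s
  · have hc2 : c.2 = 0 := hseam.1
    obtain ⟨b, e⟩ : ∃ b, c = (b, 0) := ⟨c.1, by rw [← hc2]⟩
    have hx : x c = -1 := by
      rcases hseam.2 with h | h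
      · exact h.2
      · rw [hs] at h; exact absurd h.1 (by decide)
    have hm : move0 c x s = (negX (c.1, 1) (Function.update x c 0), negX (c.1, 1) (flipS c s)) := by
      unfold move0; simp [hseam, hx, hs]
    rw [hm]
    rcases val_succ_cases (x c) with h | h
    · exact absurd hx h.1
    rcases val_neg_cases (x (b, 1)) with h' | h'
    · symm
      rw [← hA b (vert (negX (c.1, 1) (Function.update x c 0), negX (c.1, 1) (flipS c s), π))]
      apply h0
      intro k hk
      have := hc0 k hk.1
      funext d
      by_cases d1 : d = c
      · subst d1
        rw [e] at this h hs
        simp [vert, actA, negX, flipS, e, this, h.2.2, hs]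
        ring
      · by_cases d2 : d = (b, 1)
        · subst d2
          simp [vert, actA, negX, flipS, e, h'.1]
          split_ifs <;> simp
        · rw [e] at d1
          simp [vert, actA, negX, flipS, e, d1, d2]
    · symm
      rw [← hA b (vert (negX (c.1, 1) (Function.update x c 0), negX (c.1, 1) (flipS c s), π)),
        ← hB b (fun k => actA (2 * M) b (vert (negX (c.1, 1) (Function.update x c 0), negX (c.1, 1) (flipS c s), π) k))]
      apply h0
      intro k hk
      have := hc0 k hk.1
      funext d
      by_cases d1 : d = c
      · subst d1
        rw [e] at this h hs
        simp [vert, actA, actB, negX, flipS, e, this, h.2.2, hs]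
        ring
      · by_cases d2 : d = (b, 1)
        · subst d2
          simp [vert, actA, actB, negX, flipS, e, h']
          split_ifs <;> ring
        · rw [e] at d1
          simp [vert, actA, actB, negX, flipS, e, d1, d2]
  · have hm : move0 c x s = (Function.update x c (x c + 1), flipS c s) := by
      unfold move0; simp [hseam, hs]
    rw [hm]
    rcases val_succ_cases (x c) with h | h
    · apply h0
      intro k hk
      have := hc0 k hk.1
      funext d
      by_cases d1 : d = c
      · subst d1
        simp [vert, flipS, this, h.2, hs]
        ring
      · simp [vert, flipS, d1]
    · have hc2 : c.2 = 1 := by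
        by_contra hne
        have : c.2 = 0 := by
          rcases c with ⟨a, r⟩
          fin_cases r <;> simp_all
        exact hseam ⟨this, Or.inl ⟨hs, h.1⟩⟩
      obtain ⟨b, e⟩ : ∃ b, c = (b, 1) := ⟨c.1, by rw [← hc2]⟩
      symm
      rw [← hB b (vert (Function.update x c (x c + 1), flipS c s, π))]
      apply h0
      intro k hk
      have := hc0 k hk.1
      funext d
      by_cases d1 : d = c
      · subst d1
        rw [e] at this h hs
        simp [vert, actB, flipS, e, this, h.2, hs]
        ring
      · rw [e] at d1
        simp [vert, actB, flipS, e, d1]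

theorem cyc_zero (ω : (Fin (2 * n) ≃ Co n) → ZMod 2) (hn : 0 < n) (Θ : (ℕ → Pt n) → ZMod 2)
    (hi : Inv (blockT n (2 * M)) Θ) (h0 : Ind (2 * n) 0 Θ) :
    ∑ Ix : Idx n M, ω Ix.2.2 * Θ (vert Ix) = 0 := by
  have hn2 : 0 < 2 * n := by omega
  refine sum_invol _ (fun Ix => ((move0 (Ix.2.2 ⟨0, hn2⟩) Ix.1 Ix.2.1).1,
    (move0 (Ix.2.2 ⟨0, hn2⟩) Ix.1 Ix.2.1).2, Ix.2.2)) ?_ ?_ ?_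
  · rintro ⟨x, s, π⟩
    simp only
    congr 1
    rcases Int.units_eq_one_or (s (π ⟨0, hn2⟩)) with h | h
    · exact move0_Θ Θ hi h0 hn2 x s π h
    · have := move0_Θ Θ hi h0 hn2 (move0 (π ⟨0, hn2⟩) x s).1 (move0 (π ⟨0, hn2⟩) x s).2 π
        (by rw [move0_s, h]; simp)
      rw [move0_move0] at this
      exact this.symm
  · rintro ⟨x, s, π⟩ h
    have := congrArg (fun J : Idx n M => J.2.1 (π ⟨0, hn2⟩)) h
    simp only [move0_s] at this
    exact units_ne_neg _ this
  · rintro ⟨x, s, π⟩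
    simp only [move0_move0]

theorem cyc_full (hn : 0 < n) :
    Cyc (blockT n (2 * M)) (2 * n) (fun _ : Idx n M => 1) vert := by
  intro Θ hi j hj hind
  rcases Nat.eq_zero_or_pos j with h | h
  · subst h
    exact cyc_zero (fun _ => 1) hn Θ hi hind
  · rcases Nat.lt_or_ge j (2 * n) with h' | h'
    · exact cyc_mid (fun _ => 1) j h h' (fun _ => rfl) Θ hind
    · obtain rfl : j = 2 * n := by omega
      exact cyc_last (fun _ => 1) hn Θ hind
end
end TCGrid

open unitInterval
namespace TCGrid
open Finset

/-- exchange of the two blocks -/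
def sgE : Co 2 ≃ Co 2 := (Equiv.swap (0 : Fin 2) 1).prodCongr (Equiv.refl _)

/-- the block exchange on points -/
def swM (p : Pt 2) : Pt 2 := fun c => p (sgE c)

theorem sgE_sgE (c : Co 2) : sgE (sgE c) = c := by revert c; decide
theorem sgE_ne (c : Co 2) : sgE c ≠ c := by revert c; decide
theorem sgE_fst (c : Co 2) : (sgE c).1 ≠ c.1 := by revert c; decide

/-- the cycle weight for two blocks -/
def om2 (π : Fin (2 * 2) ≃ Co 2) : ZMod 2 := if (π 0).1 = 0 then 1 else 0

section
set_option linter.unusedSectionVars false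
variable {M : ℕ} [NeZero M]

/-- the involution at vertex one -/
def tau1 (Ix : Idx 2 M) : Idx 2 M :=
  if (Ix.2.2 0).1 = (Ix.2.2 1).1 then swp 0 1 Ix
  else (Ix.1 ∘ sgE, Ix.2.1 ∘ sgE, ((Equiv.swap 0 1).trans Ix.2.2).trans sgE)

theorem vert_sg (x : Co 2 → ZMod M) (s : Co 2 → ℤˣ) (π : Fin (2 * 2) ≃ Co 2) (k : ℕ) :
    vert (x ∘ sgE, s ∘ sgE, π.trans sgE) k = swM (vert (x, s, π) k) := by
  have : ∀ c, sgE.symm c = sgE c := fun c => by rw [Equiv.symm_apply_eq, sgE_sgE]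
  funext c
  simp [vert, swM, this]

theorem cyc_one (Θ : (ℕ → Pt 2) → ZMod 2) (hi : Inv {swM} Θ) (hΘ : Ind (2 * 2) 1 Θ) :
    ∑ Ix : Idx 2 M, om2 Ix.2.2 * Θ (vert Ix) = 0 := by
  have hsw : ∀ Ix : Idx 2 M, Θ (vert (swp 0 1 Ix)) = Θ (vert Ix) := fun Ix =>
    hΘ _ _ (fun k hk => vert_swp (n := 2) (j := 1) le_rfl (by norm_num) Ix k hk.1)
  refine sum_invol _ tau1 ?_ ?_ ?_
  · rintro ⟨x, s, π⟩
    by_cases h : (π 0).1 = (π 1).1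
    · simp only [tau1, h, if_true]
      rw [hsw]
      congr 1
      simp [om2, swp, h]
    · simp only [tau1, h, if_false]
      have e := hi swM rfl (vert (x, s, (Equiv.swap 0 1).trans π))
      have e2 := hsw (x, s, π)
      rw [show (vert (x ∘ sgE, s ∘ sgE, ((Equiv.swap 0 1).trans π).trans sgE)) =
        fun k => swM (vert (x, s, (Equiv.swap 0 1).trans π) k) from funext fun k => vert_sg _ _ _ k,
        e]
      change _ * Θ (vert (swp 0 1 (x, s, π))) = _
      rw [e2]
      congr 1
      have : ((sgE (π 1)).1 = 0) ↔ ((π 0).1 = 0) := by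
        generalize π 0 = a at *
        generalize π 1 = b at *
        revert h; revert a b; decide
      simp [om2, this]
  · rintro ⟨x, s, π⟩
    by_cases h : (π 0).1 = (π 1).1
    · simp only [tau1, h, if_true]
      exact swp_ne (by decide) _
    · simp only [tau1, h, if_false]
      intro e
      have := congrArg (fun J : Idx 2 M => J.2.2 2) e
      simp only [Equiv.trans_apply] at this
      rw [Equiv.swap_apply_of_ne_of_ne (by decide) (by decide)] at this
      exact sgE_ne _ this
  · rintro ⟨x, s, π⟩
    by_cases h : (π 0).1 = (π 1).1
    · simp only [tau1, h, if_true]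
      rw [if_pos, swp_swp]
      simp [swp, h]
    · simp only [tau1, h, if_false]
      rw [if_neg]
      · refine Prod.ext ?_ (Prod.ext ?_ ?_)
        · funext c; simp [sgE_sgE]
        · funext c; simp [sgE_sgE]
        · ext i : 1; simp [sgE_sgE]
      · simp only [Equiv.trans_apply, Equiv.swap_apply_left, Equiv.swap_apply_right]
        generalize π 0 = a at *
        generalize π 1 = b at *
        revert h; revert a b; decide

theorem cyc_two :
    Cyc (blockT 2 (2 * M) ∪ {swM}) (2 * 2) (fun Ix : Idx 2 M => om2 Ix.2.2) vert := by
  intro Θ hi j hj hind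
  rcases Nat.eq_zero_or_pos j with h | h
  · subst h
    exact cyc_zero om2 (by norm_num) Θ (fun t ht => hi t (Or.inl ht)) hind
  · rcases Nat.lt_or_ge j (2 * 2) with h' | h'
    · rcases Nat.lt_or_ge 1 j with h1 | h1
      · refine cyc_mid om2 j h h' (fun π => ?_) Θ hind
        unfold om2
        rw [Equiv.trans_apply, Equiv.swap_apply_of_ne_of_ne]
        · intro e; have := congrArg Fin.val e; simp at this; omega
        · intro e; have := congrArg Fin.val e; simp at this; omega
      · obtain rfl : j = 1 := by omega
        exact cyc_one Θ (fun t ht => hi t (Or.inr ht)) hind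
    · obtain rfl : j = 2 * 2 := by omega
      exact cyc_last om2 (by norm_num) Θ hind
end

/-- the standard twisted function on one block -/
def th (N u v : ℤ) : ZMod 2 := if Even (u / N) then ((v / N : ℤ) : ZMod 2) else (((-v) / N : ℤ) : ZMod 2)

theorem th_A (N : ℤ) (hN : 0 < N) (u v : ℤ) : th N (u + N) (-v) = th N u v := by
  unfold th
  rw [Int.add_ediv_of_dvd_right (dvd_refl N), Int.ediv_self hN.ne', neg_neg]
  by_cases h : Even (u / N)
  · have : ¬ Even (u / N + 1) := by rw [Int.even_add_one]; simpa using h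
    simp [h, this]
  · have : Even (u / N + 1) := by rw [Int.even_add_one]; simpa using h
    simp [h, this]

theorem th_B (N : ℤ) (hN : 0 < N) (u v : ℤ) : th N u (v + N) = th N u v + 1 := by
  unfold th
  have h1 : (v + N) / N = v / N + 1 := by
    rw [Int.add_ediv_of_dvd_right (dvd_refl N), Int.ediv_self hN.ne']
  have h2 : (-(v + N)) / N = (-v) / N - 1 := by
    rw [neg_add, ← sub_eq_add_neg, Int.sub_ediv_of_dvd _ (dvd_refl N), Int.ediv_self hN.ne']
  rw [h1, h2]
  split_ifs
  · push_cast; rfl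
  · push_cast; rw [CharTwo.sub_eq_add]

theorem th_zero (N u v : ℤ) (hu : 0 ≤ u) (hu' : u < N) (hv : 0 ≤ v) (hv' : v < N) :
    th N u v = 0 := by
  unfold th
  rw [Int.ediv_eq_zero_of_lt hu hu', Int.ediv_eq_zero_of_lt hv hv']; simp

theorem ediv_neg_small (N a : ℤ) (h : 0 < a) (h' : a ≤ N) : (-a) / N = -1 := by
  rw [Int.ediv_eq_iff_of_pos (by omega)]
  constructor <;> linarith

theorem th_neg_v (N u : ℤ) (hu : 0 ≤ u) (hu' : u < N) : th N u (-1) = 1 := by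
  unfold th
  rw [Int.ediv_eq_zero_of_lt hu hu', ediv_neg_small N 1 (by omega) (by omega)]; simp

theorem th_seam_pos (N v : ℤ) (hv : 0 < v) (hv' : v ≤ N) : th N (-1) v = 1 := by
  unfold th
  rw [ediv_neg_small N 1 (by omega) (by omega), ediv_neg_small N v hv hv']
  simp

theorem th_seam_zero (N : ℤ) (hN : 0 < N) : th N (-1) 0 = 0 := by
  unfold th
  rw [ediv_neg_small N 1 (by omega) (by omega)]
  simp

theorem th_seam_neg (N : ℤ) (hN : 2 ≤ N) : th N (-1) (-1) = 0 := by
  unfold th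
  rw [ediv_neg_small N 1 (by omega) (by omega), neg_neg, Int.ediv_eq_zero_of_lt (by omega) (by omega)]
  simp

/-- the local computation, `u` direction first -/
theorem loc_u (M : ℕ) (a d : ℕ) (ha : a < M) (hd : d < M) (s t : ℤ) (hs : s = 1 ∨ s = -1)
    (ht : t = 1 ∨ t = -1) :
    (th (2 * M) (2 * a) (2 * d) + th (2 * M) (2 * a + s) (2 * d)) *
    (th (2 * M) (2 * a + s) (2 * d) + th (2 * M) (2 * a + s) (2 * d + t)) = 0 := by
  rw [th_zero _ (2 * a) (2 * d) (by omega) (by omega) (by omega) (by omega)]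
  by_cases h : a = 0 ∧ s = -1
  · obtain ⟨rfl, rfl⟩ := h
    simp only [Nat.cast_zero, mul_zero, zero_add]
    by_cases hd0 : d = 0
    · subst hd0
      simp only [Nat.cast_zero, mul_zero, zero_add]
      rw [th_seam_zero _ (by omega), zero_mul]
    · rw [th_seam_pos _ (2 * d) (by omega) (by omega), th_seam_pos _ (2 * d + t) (by omega) (by omega)]
      rfl
  · rw [th_zero _ (2 * a + s) (2 * d) (by omega) (by omega) (by omega) (by omega)]
    simp

theorem loc_v (M : ℕ) (a d : ℕ) (ha : a < M) (hd : d < M) (s t : ℤ) (hs : s = 1 ∨ s = -1)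
    (ht : t = 1 ∨ t = -1) :
    (th (2 * M) (2 * a) (2 * d + t) + th (2 * M) (2 * a + s) (2 * d + t)) *
    (th (2 * M) (2 * a) (2 * d) + th (2 * M) (2 * a) (2 * d + t))
     = if (a = 0 ∧ s = -1) ∧ (d = 0 ∧ t = -1) then 1 else 0 := by
  rw [th_zero _ (2 * a) (2 * d) (by omega) (by omega) (by omega) (by omega)]
  by_cases h : d = 0 ∧ t = -1
  · obtain ⟨rfl, rfl⟩ := h
    simp only [Nat.cast_zero, mul_zero, zero_add]
    rw [th_neg_v _ _ (by omega) (by omega)]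
    by_cases h : a = 0 ∧ s = -1
    · obtain ⟨rfl, rfl⟩ := h
      simp only [Nat.cast_zero, mul_zero, zero_add]
      rw [th_seam_neg _ (by omega)]
      simp
    · rw [th_neg_v _ _ (by omega) (by omega)]
      simp [h]; rfl
  · rw [if_neg (by tauto), th_zero _ (2 * a) (2 * d + t) (by omega) (by omega) (by omega) (by omega)]
    simp

/-- the standard functions -/
def gstd {n : ℕ} (N : ℤ) (C : ℕ → Finset (Fin n)) (i : ℕ) (p : Pt n) : ZMod 2 :=
  ∑ b ∈ C i, th N (p (b, 0)) (p (b, 1))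

section
set_option linter.unusedSectionVars false
variable {n M : ℕ} [NeZero M]

/-- the increment of `th` when crossing coordinate `c` -/
def incr (Ix : Idx n M) (c : Co n) : ZMod 2 :=
  th (2 * M) (vert Ix (Ix.2.2.symm c) (c.1, 0)) (vert Ix (Ix.2.2.symm c) (c.1, 1)) +
  th (2 * M) (vert Ix ((Ix.2.2.symm c : ℕ) + 1) (c.1, 0)) (vert Ix ((Ix.2.2.symm c : ℕ) + 1) (c.1, 1))

theorem vert_succ_ne (Ix : Idx n M) (c d : Co n) (h : d ≠ c) :
    vert Ix ((Ix.2.2.symm c : ℕ) + 1) d = vert Ix (Ix.2.2.symm c) d := by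
  have : (Ix.2.2.symm d : ℕ) ≠ Ix.2.2.symm c := by
    intro e; exact h (Ix.2.2.symm.injective (Fin.ext e))
  have : (Ix.2.2.symm d : ℕ) < (Ix.2.2.symm c : ℕ) + 1 ↔ (Ix.2.2.symm d : ℕ) < (Ix.2.2.symm c : ℕ) := by
    omega
  simp only [vert, this]

theorem factor_eq (C : ℕ → Finset (Fin n)) (Ix : Idx n M) (c : Co n) :
    gstd (2 * M) C (Ix.2.2.symm c) (vert Ix (Ix.2.2.symm c)) +
    gstd (2 * M) C (Ix.2.2.symm c) (vert Ix ((Ix.2.2.symm c : ℕ) + 1)) =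
    if c.1 ∈ C (Ix.2.2.symm c) then incr Ix c else 0 := by
  unfold gstd
  rw [← sum_add_distrib, ← Finset.sum_ite_eq' (C (Ix.2.2.symm c)) c.1 (fun _ => incr Ix c)]
  apply sum_congr rfl
  intro b _
  split_ifs with h
  · subst h; rfl
  · rw [vert_succ_ne, vert_succ_ne]
    · exact CharTwo.add_self_eq_zero _
    · intro e; exact h (congrArg Prod.fst e)
    · intro e; exact h (congrArg Prod.fst e)

/-- the local condition on a block -/
def okc (Ix : Idx n M) (c : Co n) : Prop := (Ix.1 c).val = 0 ∧ ((Ix.2.1 c : ℤˣ) : ℤ) = -1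

open Classical in
theorem block_prod (Ix : Idx n M) (b : Fin n) :
    incr Ix (b, 0) * incr Ix (b, 1) =
    if Ix.2.2.symm (b, 1) < Ix.2.2.symm (b, 0) ∧ okc Ix (b, 0) ∧ okc Ix (b, 1) then 1 else 0 := by
  obtain ⟨x, s, π⟩ := Ix
  have hs : ∀ c, ((s c : ℤˣ) : ℤ) = 1 ∨ ((s c : ℤˣ) : ℤ) = -1 := by
    intro c
    rcases Int.units_eq_one_or (s c) with h | h <;> simp [h]
  have hx : ∀ c, (x c).val < M := fun c => ZMod.val_lt _
  rcases lt_trichotomy (π.symm (b, 1)) (π.symm (b, 0)) with h | h | h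
  · have h' : ((π.symm (b, 1) : Fin _) : ℕ) < π.symm (b, 0) := h
    have h2 : ¬ ((π.symm (b, 0) : Fin _) : ℕ) < π.symm (b, 1) := by omega
    have h3 : ¬ ((π.symm (b, 0) : Fin _) : ℕ) < π.symm (b, 1) + 1 := by omega
    have h4 : ((π.symm (b, 1) : Fin _) : ℕ) < π.symm (b, 0) + 1 := by omega
    simp only [incr, vert, h, true_and, okc, lt_irrefl, h', h2, h3, h4, if_true, if_false,
      Nat.lt_succ_self, add_zero]
    exact loc_v M _ _ (hx _) (hx _) _ _ (hs _) (hs _)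
  · exact absurd (π.symm.injective h) (by simp)
  · have h' : ((π.symm (b, 0) : Fin _) : ℕ) < π.symm (b, 1) := h
    have h2 : ¬ ((π.symm (b, 1) : Fin _) : ℕ) < π.symm (b, 0) := by omega
    have h3 : ¬ ((π.symm (b, 1) : Fin _) : ℕ) < π.symm (b, 0) + 1 := by omega
    have h4 : ((π.symm (b, 0) : Fin _) : ℕ) < π.symm (b, 1) + 1 := by omega
    rw [if_neg (fun hh => absurd hh.1 (not_lt.2 h.le))]
    simp only [incr, vert, lt_irrefl, h', h2, h3, h4, if_true, if_false,
      Nat.lt_succ_self, add_zero]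
    exact loc_u M _ _ (hx _) (hx _) _ _ (hs _) (hs _)

/-- good permutations -/
def Good (C : ℕ → Finset (Fin n)) (q : Co n → Fin (2 * n)) : Prop :=
  (∀ c, c.1 ∈ C (q c)) ∧ ∀ b, q (b, 1) < q (b, 0)

open Classical in
theorem prod_eval (C : ℕ → Finset (Fin n)) (Ix : Idx n M) :
    ∏ i ∈ range (2 * n), (gstd (2 * M) C i (vert Ix i) + gstd (2 * M) C i (vert Ix (i + 1))) =
    if Good C Ix.2.2.symm ∧ ∀ c, okc Ix c then 1 else 0 := by
  rw [← Fin.prod_univ_eq_prod_range (fun i => gstd (2 * M) C i (vert Ix i) +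
    gstd (2 * M) C i (vert Ix (i + 1))), ← Equiv.prod_comp Ix.2.2.symm]
  simp only [factor_eq]
  by_cases h : ∀ c : Co n, c.1 ∈ C (Ix.2.2.symm c)
  · simp only [h, if_true]
    rw [Fintype.prod_prod_type]
    simp only [Fin.prod_univ_two, block_prod, Finset.prod_ite_zero, Good]
    simp only [h, prod_const_one, mem_univ, true_imp_iff]
    congr 1
    simp only [implies_true, true_and, eq_iff_iff, Prod.forall, Fin.forall_fin_two]
    constructor
    · intro hh; exact ⟨fun b => (hh b).1, fun b => (hh b).2⟩
    · intro hh b; exact ⟨hh.1 b, hh.2 b⟩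
  · rw [if_neg (fun hh => h hh.1.1)]
    push Not at h
    obtain ⟨c, hc⟩ := h
    exact prod_eq_zero (mem_univ c) (by simp [hc])

open Classical in
theorem cup_eval (C : ℕ → Finset (Fin n)) (ω : (Fin (2 * n) ≃ Co n) → ZMod 2) :
    cupS (2 * n) (fun Ix : Idx n M => ω Ix.2.2) vert (gstd (2 * M) C) =
    ∑ π, ω π * if Good C π.symm then 1 else 0 := by
  unfold cupS
  simp only [prod_eval]
  rw [Fintype.sum_prod_type, Finset.sum_eq_single 0, Fintype.sum_prod_type,
    Finset.sum_eq_single (fun _ => -1)]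
  · apply sum_congr rfl
    intro π _
    simp [okc]
  · intro s _ hs
    apply sum_eq_zero
    intro π _
    rw [if_neg, mul_zero]
    intro h
    apply hs
    funext c
    have := (h.2 c).2
    simp only at this
    exact Units.ext (by simpa using this)
  · simp
  · intro x _ hx
    apply sum_eq_zero
    intro π _
    rw [if_neg, mul_zero]
    intro h
    apply hx
    funext c
    have := (h.2 c).1
    simp only [ZMod.val_eq_zero] at this
    exact this
  · simp

end
end TCGrid

open unitInterval
namespace TCGrid
open Finset

open Classical in
theorem sum_unique {ι : Type*} [Fintype ι] (f : ι → ZMod 2) (a : ι) (ha : f a = 1)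
    (τ : ι → ι) (h1 : ∀ b, f b ≠ 0 → b ≠ a → f (τ b) = f b ∧ τ b ≠ b ∧ τ (τ b) = b ∧ τ b ≠ a) :
    ∑ b, f b = 1 := by
  have e : ∑ b ∈ univ.filter (fun b => f b ≠ 0 ∧ b ≠ a), f b = 0 := by
    apply Finset.sum_involution (fun b _ => τ b)
    · intro b hb
      rw [mem_filter] at hb
      rw [(h1 b hb.2.1 hb.2.2).1]
      exact CharTwo.add_self_eq_zero _
    · intro b hb _
      rw [mem_filter] at hb
      exact (h1 b hb.2.1 hb.2.2).2.1
    · intro b hb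
      rw [mem_filter] at hb ⊢
      refine ⟨mem_univ _, ?_, (h1 b hb.2.1 hb.2.2).2.2.2⟩
      rw [(h1 b hb.2.1 hb.2.2).1]; exact hb.2.1
    · intro b hb
      rw [mem_filter] at hb
      exact (h1 b hb.2.1 hb.2.2).2.2.1
  rw [← Finset.add_sum_erase _ _ (mem_univ a), ha]
  have : ∑ b ∈ univ.erase a, f b = 0 := by
    rw [← e]
    symm
    apply sum_subset_zero_on_sdiff
    · intro b hb; simp at hb ⊢; exact hb.2
    · intro b hb
      simp at hb
      tauto
    · intros; rfl
  rw [this, add_zero]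

/-- the pairs of blocks used for `n ≥ 3` -/
def CC (n : ℕ) (_hn : 2 ≤ n) (i : ℕ) : Finset (Fin n) :=
  univ.filter (fun b => (b : ℕ) = 0 ∨ (b : ℕ) = if i < 3 then 1 else if i < 6 then 2 else i / 2)

/-- the position function of the unique fixed permutation -/
def posN (b e : ℕ) : ℕ :=
  if b = 0 then (if e = 0 then 5 else 2) else if b = 1 then (if e = 0 then 1 else 0) else
  if b = 2 then (if e = 0 then 4 else 3) else (if e = 0 then 2 * b + 1 else 2 * b)

theorem swap_symm_val {n : ℕ} (π : Fin (2 * n) ≃ Co n) (a b : Fin (2 * n)) (c : Co n) :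
   (((Equiv.swap a b).trans π).symm c : ℕ) = if (π.symm c : ℕ) = a then (b : ℕ) else
     if (π.symm c : ℕ) = b then (a : ℕ) else (π.symm c : ℕ) := by
  simp only [Equiv.symm_trans_apply, Equiv.symm_swap, Equiv.swap_apply_def, Fin.ext_iff]
  split_ifs <;> rfl

/-- numeric form of a good permutation -/
theorem good_iff {n : ℕ} (hn : 2 ≤ n) (q : Co n → Fin (2 * n)) : Good (CC n hn) q ↔
    (∀ (b : Fin n) (e : Fin 2), (b : ℕ) = 0 ∨ (b : ℕ) = if (q (b, e) : ℕ) < 3 then 1 else if (q (b, e) : ℕ) < 6 then 2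
      else (q (b, e) : ℕ) / 2) ∧ ∀ b : Fin n, (q (b, 1) : ℕ) < q (b, 0) := by
  simp [Good, CC]

set_option maxHeartbeats 1000000 in
theorem odd_big {n : ℕ} (hn : 3 ≤ n) (f : (Fin (2 * n) ≃ Co n) → ZMod 2)
    (hf : ∀ π, Good (CC n (by omega)) π.symm → f π = 1)
    (hf' : ∀ π, ¬ Good (CC n (by omega)) π.symm → f π = 0) : ∑ π, f π = 1 := by
  classical
  let pos : Co n → Fin (2 * n) := fun c => ⟨posN c.1 c.2, by
    rcases c with ⟨⟨b, hb⟩, e⟩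
    unfold posN; simp only; split_ifs <;> omega⟩
  have hpos : Function.Bijective pos := by
    rw [Fintype.bijective_iff_injective_and_card]
    refine ⟨?_, by simp; ring⟩
    rintro ⟨⟨b, hb⟩, ⟨e, he⟩⟩ ⟨⟨b', hb'⟩, ⟨e', he'⟩⟩ h
    simp only [pos, posN, Fin.mk.injEq] at h
    simp only [Prod.mk.injEq, Fin.mk.injEq]
    split_ifs at h <;> omega
  let π0 : Fin (2 * n) ≃ Co n := (Equiv.ofBijective pos hpos).symm
  have hπ0 : ∀ c, π0.symm c = pos c := fun c => rfl
  obtain ⟨z, z0⟩ : ∃ b : Fin n, (b : ℕ) = 0 := ⟨⟨0, by omega⟩, rfl⟩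
  let P2 : (Fin (2 * n) ≃ Co n) → Prop := fun π => (π.symm (z, 1) : ℕ) = 2 ∨ (π.symm (z, 0) : ℕ) = 2
  let p (i : ℕ) (hi : i < 6) : Fin (2 * n) := ⟨i, by omega⟩
  let τ : (Fin (2 * n) ≃ Co n) → (Fin (2 * n) ≃ Co n) := fun π =>
    if P2 π then (Equiv.swap (p 3 (by omega)) (p 4 (by omega))).trans π
    else (Equiv.swap (p 0 (by omega)) (p 1 (by omega))).trans π
  have key : ∀ π, Good (CC n (by omega)) π.symm → π ≠ π0 →
      Good (CC n (by omega)) (τ π).symm ∧ (P2 (τ π) ↔ P2 π) ∧ τ π ≠ π0 := by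
    intro π hg hne
    rw [good_iff] at hg
    obtain ⟨h1, h2⟩ := hg
    obtain ⟨one, one1⟩ : ∃ b : Fin n, (b : ℕ) = 1 := ⟨⟨1, by omega⟩, rfl⟩
    obtain ⟨two, two2⟩ : ∃ b : Fin n, (b : ℕ) = 2 := ⟨⟨2, by omega⟩, rfl⟩
    have inj : ∀ b e b' e', (π.symm (b, e) : ℕ) = π.symm (b', e') → (b : ℕ) = b' ∧ e = e' := by
      intro b e b' e' h
      have := π.symm.injective (Fin.ext h)
      simp only [Prod.mk.injEq] at this
      exact ⟨congrArg Fin.val this.1, this.2⟩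
    have hb : ∀ b : Fin n, 3 ≤ (b : ℕ) →
        (π.symm (b, 1) : ℕ) = 2 * b ∧ (π.symm (b, 0) : ℕ) = 2 * b + 1 := by
      intro b hb
      have e1 := h1 b 1
      have e0 := h1 b 0
      have e2 := h2 b
      split_ifs at e1 e0 <;> omega
    have hz : ∀ e, (π.symm (z, e) : ℕ) < 6 := by
      intro e
      by_contra hc
      have hlt := (π.symm (z, e)).2
      let b : Fin n := ⟨(π.symm (z, e) : ℕ) / 2, by omega⟩
      have hbv : (b : ℕ) = (π.symm (z, e) : ℕ) / 2 := rfl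
      have hb3 : 3 ≤ (b : ℕ) := by omega
      have k := hb b hb3
      have i1 := inj z e b 1
      have i0 := inj z e b 0
      rcases Nat.even_or_odd' (π.symm (z, e) : ℕ) with ⟨r, hr | hr⟩
      · have := i1 (by omega); omega
      · have := i0 (by omega); omega
    have a1 := hz 1
    have a0 := hz 0
    have a2 := h2 z
    have b1 : (π.symm (one, 1) : ℕ) < 3 := by
      have := h1 one 1
      split_ifs at this <;> omega
    have b0 : (π.symm (one, 0) : ℕ) < 3 := by
      have := h1 one 0
      split_ifs at this <;> omega
    have b2 := h2 one
    have c1 : 3 ≤ (π.symm (two, 1) : ℕ) ∧ (π.symm (two, 1) : ℕ) < 6 := by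
      have := h1 two 1
      split_ifs at this <;> omega
    have c0 : 3 ≤ (π.symm (two, 0) : ℕ) ∧ (π.symm (two, 0) : ℕ) < 6 := by
      have := h1 two 0
      split_ifs at this <;> omega
    have c2 := h2 two
    have d : ∀ e e', (π.symm (z, e) : ℕ) ≠ π.symm (one, e') ∧
        (π.symm (z, e) : ℕ) ≠ π.symm (two, e') := by
      intro e e'
      exact ⟨fun h => absurd (inj _ _ _ _ h).1 (by omega),
        fun h => absurd (inj _ _ _ _ h).1 (by omega)⟩
    have d00 := d 0 0
    have d01 := d 0 1
    have d10 := d 1 0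
    have d11 := d 1 1
    have hcase : ∀ b : Fin n, b = z ∨ b = one ∨ b = two ∨ 3 ≤ (b : ℕ) := by
      intro b
      simp only [Fin.ext_iff]
      omega
    have hcase' : ∀ e : Fin 2, e = 0 ∨ e = 1 := by decide
    have hπz0 : (π0.symm (z, 0) : ℕ) = 5 := by rw [hπ0]; simp [pos, posN, z0]
    have hπz1 : (π0.symm (z, 1) : ℕ) = 2 := by rw [hπ0]; simp [pos, posN, z0]
    clear d hz inj
    by_cases hP : P2 π
    · have hτ : τ π = (Equiv.swap (p 3 (by omega)) (p 4 (by omega))).trans π := if_pos hP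
      have hv : ∀ c, ((τ π).symm c : ℕ) = if (π.symm c : ℕ) = 3 then 4 else
        if (π.symm c : ℕ) = 4 then 3 else (π.symm c : ℕ) := by
        intro c; rw [hτ, swap_symm_val]
      have hPP : (π.symm (z, 1) : ℕ) = 2 := by
        rcases hP with h | h <;> omega
      have h5 : (π.symm (z, 0) : ℕ) ≠ 5 := by
        intro h5
        apply hne
        apply Equiv.symm_bijective.injective
        ext ⟨b, e⟩ : 2
        rw [hπ0]
        simp only [pos, posN]
        rcases hcase b with rfl | rfl | rfl | h3
        · rcases hcase' e with rfl | rfl <;> simp [z0] <;> omega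
        · rcases hcase' e with rfl | rfl <;> simp [one1] <;> omega
        · rcases hcase' e with rfl | rfl <;> simp [two2] <;> omega
        · have := hb b h3
          rcases hcase' e with rfl | rfl <;> simp [show (b : ℕ) ≠ 0 by omega,
            show (b : ℕ) ≠ 1 by omega, show (b : ℕ) ≠ 2 by omega] <;> omega
      refine ⟨?_, ?_, ?_⟩
      · rw [good_iff]
        constructor
        · intro b e
          have := h1 b e
          rw [hv]
          split_ifs at this ⊢ <;> omega
        · intro b
          rw [hv, hv]
          rcases hcase b with rfl | rfl | rfl | h3
          · split_ifs <;> omega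
          · split_ifs <;> omega
          · split_ifs <;> omega
          · have := hb b h3
            split_ifs <;> omega
      · have t1 := hv (z, 1)
        have t0 := hv (z, 0)
        simp only [P2]
        split_ifs at t1 t0 <;> omega
      · intro h
        have := hv (z, 0)
        rw [h, hπz0] at this
        split_ifs at this <;> omega
    · have hτ : τ π = (Equiv.swap (p 0 (by omega)) (p 1 (by omega))).trans π := if_neg hP
      have hv : ∀ c, ((τ π).symm c : ℕ) = if (π.symm c : ℕ) = 0 then 1 else
        if (π.symm c : ℕ) = 1 then 0 else (π.symm c : ℕ) := by
        intro c; rw [hτ, swap_symm_val]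
      have hPP : (π.symm (z, 1) : ℕ) ≠ 2 ∧ (π.symm (z, 0) : ℕ) ≠ 2 := by
        simp only [P2] at hP; omega
      refine ⟨?_, ?_, ?_⟩
      · rw [good_iff]
        constructor
        · intro b e
          have := h1 b e
          rw [hv]
          split_ifs at this ⊢ <;> omega
        · intro b
          rw [hv, hv]
          rcases hcase b with rfl | rfl | rfl | h3
          · split_ifs <;> omega
          · split_ifs <;> omega
          · split_ifs <;> omega
          · have := hb b h3
            split_ifs <;> omega
      · have t1 := hv (z, 1)
        have t0 := hv (z, 0)
        simp only [P2]
        split_ifs at t1 t0 <;> omega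
      · intro h
        have := hv (z, 1)
        rw [h, hπz1] at this
        split_ifs at this <;> omega
  apply sum_unique f π0 _ τ
  · intro π hfπ hne
    have hg : Good (CC n (by omega)) π.symm := by
      by_contra h; exact hfπ (hf' π h)
    obtain ⟨k1, k2, k3⟩ := key π hg hne
    refine ⟨by rw [hf _ k1, hf _ hg], ?_, ?_, k3⟩
    · intro e
      by_cases h : P2 π
      · have := congrArg (fun e : Fin (2 * n) ≃ Co n => e (p 3 (by omega))) e
        simp only [τ, h, if_true, Equiv.trans_apply, Equiv.swap_apply_left] at this
        have := congrArg Fin.val (π.injective this)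
        simp [p] at this
      · have := congrArg (fun e : Fin (2 * n) ≃ Co n => e (p 0 (by omega))) e
        simp only [τ, h, if_false, Equiv.trans_apply, Equiv.swap_apply_left] at this
        have := congrArg Fin.val (π.injective this)
        simp [p] at this
    · by_cases h : P2 π
      · have h' := k2.2 h
        have : τ (τ π) = (Equiv.swap (p 3 (by omega)) (p 4 (by omega))).trans (τ π) := if_pos h'
        rw [this]
        simp only [τ, h, if_true]
        ext i : 1; simp
      · have h' := fun hh => h (k2.1 hh)
        have : τ (τ π) = (Equiv.swap (p 0 (by omega)) (p 1 (by omega))).trans (τ π) := if_neg h'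
        rw [this]
        simp only [τ, h, if_false]
        ext i : 1; simp
  · apply hf
    rw [good_iff]
    constructor
    · rintro ⟨b, hb⟩ ⟨e, he⟩
      simp only [hπ0, pos, posN]
      split_ifs <;> omega
    · rintro ⟨b, hb⟩
      simp only [hπ0, pos, posN]
      split_ifs <;> simp_all

theorem four_a (w1 w2 w3 w4 : Fin (2 * 2)) (h3 : w2 = 3) (e0 : w1 < w2) (e1 : w3 < w4) (a0 : w1 = 0 ∨ w2 = 0)
    (i1 : w1 ≠ w4) (i2 : w1 ≠ w3) (i3 : w2 ≠ w4) (i4 : w2 ≠ w3) :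
    w1 = 0 ∧ w3 = 1 ∧ w4 = 2 := by
  have v0 : ((0 : Fin (2 * 2)) : ℕ) = 0 := rfl
  have v1 : ((1 : Fin (2 * 2)) : ℕ) = 1 := rfl
  have v2 : ((2 : Fin (2 * 2)) : ℕ) = 2 := rfl
  have v3 : ((3 : Fin (2 * 2)) : ℕ) = 3 := rfl
  simp only [Fin.ext_iff, Fin.lt_def, ne_eq, v0, v1, v2, v3] at *
  omega

theorem four_b (w1 w2 w3 w4 : Fin (2 * 2)) (h3 : w2 ≠ 3) (e0 : w1 < w2) (e1 : w3 < w4) (a0 : w1 = 0 ∨ w2 = 0)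
    (i1 : w1 ≠ w4) (i2 : w1 ≠ w3) (i3 : w2 ≠ w4) (i4 : w2 ≠ w3) :
    w1 = 0 ∧ (w2 = 1 ∧ w3 = 2 ∧ w4 = 3 ∨ w2 = 2 ∧ w3 = 1 ∧ w4 = 3) := by
  have v0 : ((0 : Fin (2 * 2)) : ℕ) = 0 := rfl
  have v1 : ((1 : Fin (2 * 2)) : ℕ) = 1 := rfl
  have v2 : ((2 : Fin (2 * 2)) : ℕ) = 2 := rfl
  have v3 : ((3 : Fin (2 * 2)) : ℕ) = 3 := rfl
  simp only [Fin.ext_iff, Fin.lt_def, ne_eq, v0, v1, v2, v3] at *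
  omega

theorem odd_two (f : (Fin (2 * 2) ≃ Co 2) → ZMod 2)
    (hf : ∀ π, (π 0).1 = 0 → (∀ b, π.symm (b, 1) < π.symm (b, 0)) → f π = 1)
    (hf' : ∀ π, ¬ ((π 0).1 = 0 ∧ (∀ b, π.symm (b, 1) < π.symm (b, 0))) → f π = 0) :
    ∑ π, f π = 1 := by
  let pos : Co 2 → Fin (2 * 2) := fun c => if c = (0, 1) then 0 else if c = (1, 1) then 1 else
    if c = (1, 0) then 2 else 3
  have hpos : Function.Bijective pos := by decide
  let π0 : Fin (2 * 2) ≃ Co 2 := (Equiv.ofBijective pos hpos).symm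
  have hπ0 : ∀ c, π0.symm c = pos c := fun c => rfl
  let τ : (Fin (2 * 2) ≃ Co 2) → (Fin (2 * 2) ≃ Co 2) := fun π => (Equiv.swap 1 2).trans π
  apply sum_unique f π0 _ τ
  · intro π hfπ hne
    have hg : (π 0).1 = 0 ∧ (∀ b, π.symm (b, 1) < π.symm (b, 0)) := by
      by_contra h; exact hfπ (hf' π h)
    obtain ⟨h1, h2⟩ := hg
    have hsv : ∀ c, (τ π).symm c = Equiv.swap 1 2 (π.symm c) := fun c => by
      simp [τ]
    have e0 := h2 0
    have e1 := h2 1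
    have a0 : π.symm (0, 1) = 0 ∨ π.symm (0, 0) = 0 := by
      simp only [Equiv.symm_apply_eq]
      generalize π 0 = a at *
      revert h1; revert a; decide
    have i1 : π.symm (0, 1) ≠ π.symm (1, 0) := fun h => by simpa using π.symm.injective h
    have i2 : π.symm (0, 1) ≠ π.symm (1, 1) := fun h => by simpa using π.symm.injective h
    have i3 : π.symm (0, 0) ≠ π.symm (1, 0) := fun h => by simpa using π.symm.injective h
    have i4 : π.symm (0, 0) ≠ π.symm (1, 1) := fun h => by simpa using π.symm.injective h
    have h3 : π.symm (0, 0) ≠ 3 := by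
      intro h3
      apply hne
      apply Equiv.symm_bijective.injective
      ext ⟨b, e⟩ : 2
      rw [hπ0]
      have hk : π.symm (0, 1) = 0 ∧ π.symm (1, 1) = 1 ∧ π.symm (1, 0) = 2 := by
        generalize π.symm (0, 1) = w1 at *
        generalize π.symm (0, 0) = w2 at *
        generalize π.symm (1, 1) = w3 at *
        generalize π.symm (1, 0) = w4 at *
        clear hsv hne hfπ hf hf' hπ0 π0 τ hpos h1 h2 pos
        exact four_a _ _ _ _ h3 e0 e1 a0 i1 i2 i3 i4
      fin_cases b <;> fin_cases e <;> simp [pos, hk, h3]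
    have hk : π.symm (0, 1) = 0 ∧ (π.symm (0, 0) = 1 ∧ π.symm (1, 1) = 2 ∧ π.symm (1, 0) = 3 ∨
        π.symm (0, 0) = 2 ∧ π.symm (1, 1) = 1 ∧ π.symm (1, 0) = 3) := by
      generalize π.symm (0, 1) = w1 at *
      generalize π.symm (0, 0) = w2 at *
      generalize π.symm (1, 1) = w3 at *
      generalize π.symm (1, 0) = w4 at *
      clear hsv hne hfπ hf hf' hπ0 π0 τ hpos h1 h2 pos
      exact four_b _ _ _ _ h3 e0 e1 a0 i1 i2 i3 i4
    refine ⟨?_, ?_, ?_, ?_⟩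
    · rw [hf π h1 h2]
      apply hf
      · simpa [τ, Equiv.swap_apply_of_ne_of_ne] using h1
      · intro b
        rw [hsv, hsv]
        fin_cases b <;> rcases hk with ⟨k, k' | k'⟩ <;> simp [k, k'] <;> decide
    · intro h
      have := congrArg (fun e : Fin (2 * 2) ≃ Co 2 => e 1) h
      simp [τ] at this
    · ext i : 1; simp [τ]
    · intro h
      have := hsv (0, 0)
      rw [h, hπ0] at this
      rcases hk with ⟨k, k' | k'⟩ <;> simp [k'] at this <;> revert this <;> decide
  · apply hf
    · rw [show π0 0 = (0, 1) from by rw [← Equiv.eq_symm_apply, hπ0]; decide]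
    · intro b; rw [hπ0, hπ0]; revert b; decide
end TCGrid

open unitInterval
namespace TCGrid
open Finset

theorem gstd_A {n : ℕ} (N : ℤ) (hN : 0 < N) (C : ℕ → Finset (Fin n)) (i : ℕ) (b : Fin n)
    (p : Pt n) : gstd N C i (actA N b p) = gstd N C i p := by
  unfold gstd
  apply sum_congr rfl
  intro b' _
  by_cases h : b' = b
  · subst h
    simp only [actA, if_true]
    rw [if_neg (by simp), th_A N hN]
  · simp [actA, h]

theorem gstd_B {n : ℕ} (N : ℤ) (hN : 0 < N) (C : ℕ → Finset (Fin n)) (i : ℕ) (b : Fin n)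
    (p : Pt n) : gstd N C i (actB N b p) = gstd N C i p + if b ∈ C i then 1 else 0 := by
  unfold gstd
  rw [← Finset.sum_ite_eq' (C i) b (fun _ => 1), ← sum_add_distrib]
  apply sum_congr rfl
  intro b' _
  by_cases h : b' = b
  · subst h
    simp only [actB, if_true]
    rw [if_neg (by simp), th_B N hN]
  · simp [actB, h]

theorem gstd_S (N : ℤ) (i : ℕ) (p : Pt 2) :
    gstd N (fun _ => univ) i (swM p) = gstd N (fun _ => univ) i p := by
  unfold gstd
  simp only [Fin.sum_univ_two, swM, sgE, Equiv.prodCongr_apply, Prod.map, Equiv.swap_apply_left,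
    Equiv.swap_apply_right, Equiv.refl_apply]
  rw [add_comm]

theorem exists_of_cupS {P ι : Type*} [Fintype ι] {m : ℕ} {ω : ι → ZMod 2} {vt : ι → ℕ → P}
    {g : ℕ → P → ZMod 2} (h : cupS m ω vt g ≠ 0) :
    ∃ Ix, ∀ i < m, g i (vt Ix i) ≠ g i (vt Ix (i + 1)) := by
  obtain ⟨Ix, _, hI⟩ := Finset.exists_ne_zero_of_sum_ne_zero h
  refine ⟨Ix, fun i hi e => hI ?_⟩
  rw [prod_eq_zero (mem_range.2 hi), mul_zero]
  rw [e]; exact CharTwo.add_self_eq_zero _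

theorem grid_big {n M : ℕ} [NeZero M] (hn : 3 ≤ n) (g : ℕ → Pt n → ZMod 2)
    (hA : ∀ i b p, g i (actA (2 * M) b p) = g i p)
    (hB : ∀ i b p, g i (actB (2 * M) b p) = g i p + if b ∈ CC n (by omega) i then 1 else 0) :
    ∃ Ix : Idx n M, ∀ i < 2 * n, g i (vert Ix i) ≠ g i (vert Ix (i + 1)) := by
  classical
  have hN : (0 : ℤ) < 2 * M := by have := NeZero.pos M; omega
  apply exists_of_cupS (ω := fun _ => 1)
  rw [cupS_inv (cyc_full (by omega)) g (gstd (2 * M) (CC n (by omega)))]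
  · have := cup_eval (M := M) (CC n (by omega)) (fun _ => 1)
    rw [this, odd_big hn]
    · exact one_ne_zero
    · intro π h; simp [h]
    · intro π h; simp [h]
  · rintro t ⟨b, rfl | rfl⟩ i
    · exact ⟨0, fun p => ⟨by rw [hA, add_zero], by rw [gstd_A _ hN, add_zero]⟩⟩
    · exact ⟨_, fun p => ⟨hB i b p, gstd_B _ hN _ _ _ _⟩⟩

theorem grid_two {M : ℕ} [NeZero M] (g : ℕ → Pt 2 → ZMod 2)
    (hA : ∀ i b p, g i (actA (2 * M) b p) = g i p)
    (hB : ∀ i b p, g i (actB (2 * M) b p) = g i p + 1)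
    (hS : ∀ i p, g i (swM p) = g i p) :
    ∃ Ix : Idx 2 M, ∀ i < 2 * 2, g i (vert Ix i) ≠ g i (vert Ix (i + 1)) := by
  classical
  have hN : (0 : ℤ) < 2 * M := by have := NeZero.pos M; omega
  apply exists_of_cupS (ω := fun Ix => om2 Ix.2.2)
  rw [cupS_inv cyc_two g (gstd (2 * M) (fun _ => univ))]
  · have := cup_eval (M := M) (n := 2) (fun _ => univ) om2
    rw [this, odd_two]
    · exact one_ne_zero
    · intro π h h'
      simp only [om2, h, if_true, Good, mem_univ, implies_true, true_and, one_mul]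
      rw [if_pos h']
    · intro π h
      by_cases h1 : (π 0).1 = 0
      · have : ¬ Good (fun _ => univ) π.symm := fun hh => h ⟨h1, hh.2⟩
        rw [if_neg this, mul_zero]
      · simp [om2, h1]
  · rintro t (⟨b, rfl | rfl⟩ | rfl) i
    · exact ⟨0, fun p => ⟨by rw [hA, add_zero], by rw [gstd_A _ hN, add_zero]⟩⟩
    · refine ⟨1, fun p => ⟨hB i b p, ?_⟩⟩
      rw [gstd_B _ hN]; simp
    · exact ⟨0, fun p => ⟨by rw [hS, add_zero], by rw [gstd_S, add_zero]⟩⟩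
end TCGrid

open unitInterval
namespace TCTop
open Topology

/-- the projection -/
def pr (y : Sph 2) : RP 2 := Quotient.mk (antipodalSetoid 2) y

theorem pr_eq (x y : Sph 2) : pr x = pr y ↔ x = y ∨ x = -y := by
  have h1 : pr x = pr y ↔ ((x : EuclideanSpace ℝ (Fin 3)) = y ∨
      (x : EuclideanSpace ℝ (Fin 3)) = -y) := Quotient.eq (r := antipodalSetoid 2)
  rw [h1, Subtype.ext_iff, Subtype.ext_iff]
  rfl

theorem pr_neg (x : Sph 2) : pr (-x) = pr x := (pr_eq _ _).2 (Or.inr rfl)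

theorem pr_surj (x : RP 2) : ∃ y, pr y = x := Quotient.exists_rep x

theorem pr_quot : IsQuotientMap pr := isQuotientMap_quotient_mk'

theorem pr_cont : Continuous pr := pr_quot.continuous

theorem dist_neg_self (x : Sph 2) : dist x (-x) = 2 := by
  rw [Subtype.dist_eq]
  change dist (x : EuclideanSpace ℝ (Fin 3)) (-x) = 2
  rw [dist_eq_norm, sub_neg_eq_add, ← two_smul ℝ, norm_smul]
  have := x.2
  rw [mem_sphere_zero_iff_norm] at this
  rw [this]; norm_num

theorem ne_neg_self (x : Sph 2) : x ≠ -x := by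
  intro h
  have := dist_neg_self x
  rw [← h, dist_self] at this
  norm_num at this

/-- the antipodal action -/
@[reducible] noncomputable def antiAct : MulAction ℤˣ (Sph 2) where
  smul g x := if g = 1 then x else -x
  one_smul x := if_pos rfl
  mul_smul g h x := by
    change (if g * h = 1 then x else -x) = if g = 1 then (if h = 1 then x else -x) else
      -(if h = 1 then x else -x)
    rcases Int.units_eq_one_or g with rfl | rfl <;> rcases Int.units_eq_one_or h with rfl | rfl <;>
      simp

theorem pr_cov : IsCoveringMap pr := by
  let _ := antiAct
  have sm : ∀ (g : ℤˣ) (x : Sph 2), g • x = if g = 1 then x else -x := fun g x => rfl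
  have hne : ¬ (-1 : ℤˣ) = 1 := by decide
  have : IsQuotientCoveringMap pr ℤˣ := by
    refine ⟨pr_quot, ⟨fun g => ?_⟩, ?_, ?_⟩
    · simp only [sm]
      split_ifs
      · exact continuous_id
      · exact continuous_neg
    · intro x y
      rw [pr_eq]
      simp only [MulAction.mem_orbit_iff, sm]
      constructor
      · rintro (h | h)
        · exact ⟨1, by simp [h]⟩
        · exact ⟨-1, by simp [h, hne]⟩
      · rintro ⟨g, h⟩
        split_ifs at h
        · exact Or.inl h.symm
        · exact Or.inr h.symm
    · intro e
      refine ⟨Metric.ball e 1, Metric.ball_mem_nhds _ one_pos, ?_⟩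
      rintro g ⟨y, ⟨x, hx, rfl⟩, hy⟩
      rcases Int.units_eq_one_or g with rfl | rfl
      · rfl
      · simp only [sm, hne, if_false, Metric.mem_ball] at hx hy
        have h1 := dist_triangle_right x (-x) e
        rw [dist_neg_self] at h1
        linarith
  exact this.isCoveringMap

/-- two endpoint lifts are joined by lifted paths -/
def Rel (α β : C(I, RP 2)) (ya yb : Sph 2) : Prop :=
  ∃ A B : C(I, Sph 2), (∀ t, pr (A t) = α t) ∧ (∀ t, pr (B t) = β t) ∧ A 0 = B 0 ∧
    A 1 = ya ∧ B 1 = yb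

/-- negation of a lifted path -/
noncomputable def negC (A : C(I, Sph 2)) : C(I, Sph 2) := ⟨fun t => -A t, A.continuous.neg⟩

theorem Rel.neg {α β : C(I, RP 2)} {ya yb : Sph 2} (h : Rel α β ya yb) : Rel α β (-ya) (-yb) := by
  obtain ⟨A, B, h1, h2, h3, h4, h5⟩ := h
  refine ⟨negC A, negC B, fun t => ?_, fun t => ?_, ?_, ?_, ?_⟩
  · change pr (-A t) = _; rw [pr_neg, h1]
  · change pr (-B t) = _; rw [pr_neg, h2]
  · change -A 0 = -B 0; rw [h3]
  · change -A 1 = _; rw [h4]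
  · change -B 1 = _; rw [h5]

theorem Rel.symm {α β : C(I, RP 2)} {ya yb : Sph 2} (h : Rel α β ya yb) : Rel β α yb ya := by
  obtain ⟨A, B, h1, h2, h3, h4, h5⟩ := h
  exact ⟨B, A, h2, h1, h3.symm, h5, h4⟩

theorem lift_unique {A A' : C(I, Sph 2)} (h : ∀ t, pr (A t) = pr (A' t)) (t0 : I)
    (h0 : A t0 = A' t0) : A = A' := by
  apply DFunLike.coe_injective
  exact pr_cov.eq_of_comp_eq A.continuous A'.continuous (funext h) t0 h0

theorem Rel.unique {α β : C(I, RP 2)} {ya yb : Sph 2} (h : Rel α β ya yb) :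
    ¬ Rel α β ya (-yb) := by
  rintro ⟨A', B', h1', h2', h3', h4', h5'⟩
  obtain ⟨A, B, h1, h2, h3, h4, h5⟩ := h
  have e1 : A = A' := lift_unique (fun t => by rw [h1, h1']) 1 (by rw [h4, h4'])
  have e2 : B = B' := lift_unique (fun t => by rw [h2, h2']) 0 (by rw [← h3, ← h3', e1])
  rw [e2, h5'] at h5
  exact ne_neg_self _ h5.symm

/-- the lifted endpoint varies continuously -/
theorem endpoint {V : Type*} [TopologicalSpace V] (α β : C(V, C(I, RP 2))) (ya yb : C(V, Sph 2))
    (h0 : ∀ v, α v 0 = β v 0) (ha : ∀ v, α v 1 = pr (ya v)) :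
    ∃ f : C(V, Sph 2), ∀ v, pr (f v) = β v 1 ∧ ∀ y, Rel (α v) (β v) (ya v) y ↔ f v = y := by
  let H : C(I × V, RP 2) := ⟨fun q => α q.2 (σ q.1), by fun_prop⟩
  have H0 : ∀ v, H (0, v) = pr (ya v) := fun v => by
    change α v (σ 0) = _; rw [unitInterval.symm_zero, ha]
  let L := pr_cov.liftHomotopy H ya H0
  have hL : ∀ t v, pr (L (t, v)) = α v (σ t) := fun t v =>
    congrFun (pr_cov.liftHomotopy_lifts H ya H0) (t, v)
  have hL0 : ∀ v, L (0, v) = ya v := pr_cov.liftHomotopy_zero H ya H0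
  let z : C(V, Sph 2) := ⟨fun v => L (1, v), by fun_prop⟩
  let H' : C(I × V, RP 2) := ⟨fun q => β q.2 q.1, by fun_prop⟩
  have H'0 : ∀ v, H' (0, v) = pr (z v) := fun v => by
    change β v 0 = pr (L (1, v)); rw [hL, unitInterval.symm_one, h0]
  let L' := pr_cov.liftHomotopy H' z H'0
  have hL' : ∀ t v, pr (L' (t, v)) = β v t := fun t v =>
    congrFun (pr_cov.liftHomotopy_lifts H' z H'0) (t, v)
  have hL'0 : ∀ v, L' (0, v) = L (1, v) := pr_cov.liftHomotopy_zero H' z H'0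
  refine ⟨⟨fun v => L' (1, v), by fun_prop⟩, fun v => ⟨hL' 1 v, fun y => ?_⟩⟩
  have hR : Rel (α v) (β v) (ya v) (L' (1, v)) := by
    refine ⟨⟨fun t => L (σ t, v), by fun_prop⟩, ⟨fun t => L' (t, v), by fun_prop⟩, ?_, ?_, ?_, ?_, rfl⟩
    · intro t; change pr (L (σ t, v)) = _; rw [hL, unitInterval.symm_symm]
    · intro t; exact hL' t v
    · change L (σ 0, v) = L' (0, v); rw [unitInterval.symm_zero, hL'0]
    · change L (σ 1, v) = _; rw [unitInterval.symm_one, hL0]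
  change _ ↔ L' (1, v) = y
  constructor
  · intro h
    have hpy : pr y = β v 1 := by
      obtain ⟨A, B, _, h2, _, _, h5⟩ := h
      rw [← h5, h2]
    have := (pr_eq y (L' (1, v))).1 (by rw [hpy, hL'])
    rcases this with e | e
    · exact e.symm
    · rw [e] at h
      exact absurd h hR.unique
  · rintro rfl; exact hR

theorem rel_open {V : Type*} [TopologicalSpace V] (α β : C(V, C(I, RP 2))) (ya yb : C(V, Sph 2))
    (h0 : ∀ v, α v 0 = β v 0) (ha : ∀ v, α v 1 = pr (ya v)) (hb : ∀ v, β v 1 = pr (yb v)) :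
    IsOpen {v | Rel (α v) (β v) (ya v) (yb v)} ∧
    (∀ v, Rel (α v) (β v) (ya v) (-yb v) ↔ ¬ Rel (α v) (β v) (ya v) (yb v)) := by
  obtain ⟨f, hf⟩ := endpoint α β ya yb h0 ha
  have hor : ∀ v, f v = yb v ∨ f v = - yb v := fun v => (pr_eq _ _).1 (by rw [(hf v).1, hb])
  constructor
  · have : {v | Rel (α v) (β v) (ya v) (yb v)} = {v | dist (f v) (yb v) < 1} := by
      ext v
      simp only [Set.mem_ofPred_eq, (hf v).2]
      constructor
      · intro h; rw [h, dist_self]; exact one_pos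
      · intro h
        rcases hor v with e | e
        · exact e
        · rw [e, dist_comm, dist_neg_self] at h; norm_num at h
    rw [this]
    exact isOpen_lt (by fun_prop) continuous_const
  · intro v
    rw [(hf v).2, (hf v).2]
    constructor
    · intro h h'; rw [h] at h'; exact ne_neg_self _ h'.symm
    · intro h; rcases hor v with e | e
      · exact absurd e h
      · exact e

open Classical in
/-- a set-theoretic sign -/
noncomputable def tauS (y : Sph 2) : ZMod 2 := if y = Quotient.out (pr y) then 0 else 1

theorem tauS_neg (y : Sph 2) : tauS (-y) = tauS y + 1 := by
  unfold tauS
  rw [pr_neg]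
  have h : pr (Quotient.out (pr y)) = pr y := Quotient.out_eq _
  generalize Quotient.out (pr y) = z at *
  rcases (pr_eq _ _).1 h with rfl | rfl
  · rw [if_neg (ne_neg_self z).symm, if_pos rfl, zero_add]
  · rw [if_pos rfl, if_neg (ne_neg_self y)]; rfl

/-- flip one coordinate -/
noncomputable def flip {n : ℕ} (c : Fin n) (y : Fin n → Sph 2) : Fin n → Sph 2 := Function.update y c (-y c)

theorem pr_flip {n : ℕ} (c : Fin n) (y : Fin n → Sph 2) :
    (fun j => pr (flip c y j)) = fun j => pr (y j) := by
  funext j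
  unfold flip
  by_cases h : j = c
  · subst h; rw [Function.update_self, pr_neg]
  · rw [Function.update_of_ne h]

theorem zmod2_cases (x : ZMod 2) : x = 0 ∨ x = 1 := by revert x; decide

open Classical in
theorem sign_exists {n : ℕ} (U : Set (Fin n → RP 2)) (hU : IsOpen U)
    (hinv : ∀ sg : Equiv.Perm (Fin n), ∀ x ∈ U, permTuple sg x ∈ U)
    (s : C(U, Fin n → C(unitInterval, RP 2)))
    (h0 : ∀ x : U, ∀ j j' : Fin n, s x j 0 = s x j' 0)
    (h1 : ∀ x : U, ∀ j : Fin n, s x j 1 = (x : Fin n → RP 2) j)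
    (hs : ∀ x : U, ∀ sg : Equiv.Perm (Fin n), ∀ hx : permTuple sg (x : Fin n → RP 2) ∈ U,
        s ⟨permTuple sg (x : Fin n → RP 2), hx⟩ = permTuple sg (s x))
    (a b : Fin n) (hab : a ≠ b) :
    ∃ g : (Fin n → Sph 2) → ZMod 2,
      (∀ c y, g (flip c y) = g y + if c = a ∨ c = b then 1 else 0) ∧
      (∀ r, IsOpen {y | (fun j => pr (y j)) ∈ U ∧ g y = r}) ∧
      (∀ y, g (fun j => y (Equiv.swap a b j)) = g y) := by
  let PR : (Fin n → Sph 2) → (Fin n → RP 2) := fun y j => pr (y j)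
  have hPR : Continuous PR := continuous_pi fun j => pr_cont.comp (continuous_apply j)
  let q : C({y // PR y ∈ U}, U) :=
    ⟨fun y => ⟨PR y.1, y.2⟩, (hPR.comp continuous_subtype_val).subtype_mk _⟩
  let α (j : Fin n) : C({y // PR y ∈ U}, C(I, RP 2)) := ⟨fun v => s (q v) j, by fun_prop⟩
  let yy (j : Fin n) : C({y // PR y ∈ U}, Sph 2) :=
    ⟨fun v => v.1 j, (continuous_apply j).comp continuous_subtype_val⟩
  have hα0 : ∀ v, α a v 0 = α b v 0 := fun v => h0 _ _ _
  have hα1 : ∀ j v, α j v 1 = pr (yy j v) := fun j v => h1 _ _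
  obtain ⟨o1, k1⟩ := rel_open (α a) (α b) (yy a) (yy b) hα0 (hα1 a) (hα1 b)
  obtain ⟨o2, k2⟩ := rel_open (α a) (α b) (yy a) ⟨fun v => -yy b v, by fun_prop⟩ hα0 (hα1 a)
    (fun v => by change _ = pr (- yy b v); rw [pr_neg]; exact hα1 b v)
  let R : ∀ y, PR y ∈ U → Prop := fun y h => Rel (s ⟨PR y, h⟩ a) (s ⟨PR y, h⟩ b) (y a) (y b)
  have key : ∀ y h, Rel (s ⟨PR y, h⟩ a) (s ⟨PR y, h⟩ b) (y a) (- y b) ↔ ¬ R y h :=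
    fun y h => k1 ⟨y, h⟩
  let g : (Fin n → Sph 2) → ZMod 2 := fun y =>
    if h : PR y ∈ U then (if R y h then 0 else 1) else tauS (y a) + tauS (y b)
  have gin : ∀ y (h : PR y ∈ U), g y = if R y h then 0 else 1 := fun y h => dif_pos h
  have gout : ∀ y (h : PR y ∉ U), g y = tauS (y a) + tauS (y b) := fun y h => dif_neg h
  have h11 : (1 : ZMod 2) + 1 = 0 := rfl
  refine ⟨g, ?_, ?_, ?_⟩
  · intro c y
    have e := pr_flip c y
    have e' : PR (flip c y) = PR y := e
    by_cases h : PR y ∈ U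
    · have hh : PR (flip c y) ∈ U := by rw [e']; exact h
      rw [gin y h, gin _ hh]
      have hR : R (flip c y) hh ↔ Rel (s ⟨PR y, h⟩ a) (s ⟨PR y, h⟩ b) (flip c y a) (flip c y b) := by
        simp only [R, e']
      by_cases ca : c = a
      · subst ca
        have : flip c y b = y b := Function.update_of_ne hab.symm _ _
        have t : flip c y c = - y c := Function.update_self _ _ _
        have hR' : R (flip c y) hh ↔ ¬ R y h := by
          rw [hR, this, t, ← key]
          constructor
          · intro hr; have := hr.neg; rwa [neg_neg] at this
          · intro hr; have := hr.neg; rwa [neg_neg] at this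
        by_cases hr : R y h <;> simp [hR', hr, h11]
      · have ta : flip c y a = y a := Function.update_of_ne (Ne.symm ca) _ _
        by_cases cb : c = b
        · subst cb
          have t : flip c y c = - y c := Function.update_self _ _ _
          have hR' : R (flip c y) hh ↔ ¬ R y h := by
            rw [hR, ta, t, ← key]
          by_cases hr : R y h <;> simp [hR', hr, h11]
        · have tb : flip c y b = y b := Function.update_of_ne (Ne.symm cb) _ _
          have hR' : R (flip c y) hh ↔ R y h := by rw [hR, ta, tb]
          simp [hR', ca, cb]
    · have hh : PR (flip c y) ∉ U := by rw [e']; exact h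
      rw [gout y h, gout _ hh]
      by_cases ca : c = a
      · subst ca
        have : flip c y b = y b := Function.update_of_ne hab.symm _ _
        have t : flip c y c = - y c := Function.update_self _ _ _
        rw [this, t, tauS_neg]; simp; ring
      · have ta : flip c y a = y a := Function.update_of_ne (Ne.symm ca) _ _
        by_cases cb : c = b
        · subst cb
          have t : flip c y c = - y c := Function.update_self _ _ _
          rw [ta, t, tauS_neg]; simp; ring
        · have tb : flip c y b = y b := Function.update_of_ne (Ne.symm cb) _ _
          simp [ta, tb, ca, cb]
  · have hVo : IsOpen (PR ⁻¹' U) := hU.preimage hPR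
    intro r
    rcases zmod2_cases r with rfl | rfl
    · have := hVo.isOpenMap_subtype_val _ o1
      convert this using 1
      ext y
      simp only [Set.mem_ofPred_eq, Set.mem_image]
      constructor
      · rintro ⟨hy, hg⟩
        refine ⟨⟨y, hy⟩, ?_, rfl⟩
        rw [gin y hy] at hg
        by_contra hr
        have hr2 : ¬ R y hy := hr
        rw [if_neg hr2] at hg
        exact one_ne_zero hg
      · rintro ⟨⟨y', hy⟩, hr, rfl⟩
        have hr2 : R y' hy := hr
        exact ⟨hy, by rw [gin y' hy, if_pos hr2]⟩
    · have := hVo.isOpenMap_subtype_val _ o2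
      convert this using 1
      ext y
      simp only [Set.mem_ofPred_eq, Set.mem_image]
      constructor
      · rintro ⟨hy, hg⟩
        refine ⟨⟨y, hy⟩, ?_, rfl⟩
        rw [gin y hy] at hg
        apply (key y hy).2
        intro hr
        rw [if_pos hr] at hg
        exact zero_ne_one hg
      · rintro ⟨⟨y', hy⟩, hr, rfl⟩
        exact ⟨hy, by rw [gin y' hy, if_neg ((key y' hy).1 hr)]⟩
  · intro y
    have e : PR (fun j => y (Equiv.swap a b j)) = permTuple (Equiv.swap a b) (PR y) := rfl
    by_cases h : PR y ∈ U
    · have hh : PR (fun j => y (Equiv.swap a b j)) ∈ U := hinv _ _ h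
      rw [gin y h, gin _ hh]
      have hR : R (fun j => y (Equiv.swap a b j)) hh ↔ R y h := by
        simp only [R]
        have := hs ⟨PR y, h⟩ (Equiv.swap a b) hh
        rw [show s ⟨PR (fun j => y (Equiv.swap a b j)), hh⟩ = permTuple (Equiv.swap a b) (s ⟨PR y, h⟩)
          from this]
        simp only [permTuple, Equiv.swap_apply_left, Equiv.swap_apply_right]
        exact ⟨Rel.symm, Rel.symm⟩
      simp [hR]
    · have hh : PR (fun j => y (Equiv.swap a b j)) ∉ U := by
        intro hh
        apply h
        have := hinv (Equiv.swap a b) _ hh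
        convert this using 1
        funext j
        simp [permTuple, PR]
      rw [gout y h, gout _ hh]
      simp [add_comm]
end TCTop

open unitInterval
namespace TCTop
open Topology TCGrid Real

theorem phi_mem (u v : ℝ) : (!₂[cos (π * v), sin (π * v) * cos (π * u), sin (π * v) * sin (π * u)] :
    EuclideanSpace ℝ (Fin 3)) ∈ Metric.sphere (0 : EuclideanSpace ℝ (Fin 3)) 1 := by
  rw [mem_sphere_zero_iff_norm, EuclideanSpace.norm_eq, Real.sqrt_eq_one, Fin.sum_univ_three]
  simp only [Real.norm_eq_abs, sq_abs]
  simp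
  have h1 := sin_sq_add_cos_sq (π * v)
  have h2 := sin_sq_add_cos_sq (π * u)
  linear_combination h1 + sin (π * v) ^ 2 * h2

/-- parametrization of the sphere -/
noncomputable def phi (u v : ℝ) : Sph 2 := ⟨_, phi_mem u v⟩

theorem phi_cont : Continuous fun q : ℝ × ℝ => phi q.1 q.2 := by
  unfold phi
  refine Continuous.subtype_mk ?_ _
  refine (PiLp.continuous_toLp 2 (fun _ : Fin 3 => ℝ)).comp ?_
  refine continuous_pi fun i => ?_
  fin_cases i <;> simp <;> fun_prop

theorem phi_glide (u v : ℝ) : phi (u + 1) (-v) = phi u v := by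
  apply Subtype.ext
  simp only [phi]
  have h1 : cos (π * (u + 1)) = - cos (π * u) := by rw [mul_add, mul_one, cos_add_pi]
  have h2 : sin (π * (u + 1)) = - sin (π * u) := by rw [mul_add, mul_one, sin_add_pi]
  rw [h1, h2, mul_neg π v, cos_neg, sin_neg]
  congr 2
  simp

theorem phi_anti (u v : ℝ) : phi u (v + 1) = - phi u v := by
  apply Subtype.ext
  change _ = -(phi u v : EuclideanSpace ℝ (Fin 3))
  simp only [phi]
  have h1 : cos (π * (v + 1)) = - cos (π * v) := by rw [mul_add, mul_one, cos_add_pi]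
  have h2 : sin (π * (v + 1)) = - sin (π * v) := by rw [mul_add, mul_one, sin_add_pi]
  rw [h1, h2]
  ext i
  fin_cases i <;> simp

/-- the parametrization of the product -/
noncomputable def EE {n : ℕ} (w : Co n → ℝ) (b : Fin n) : Sph 2 := phi (w (b, 0)) (w (b, 1))

theorem EE_cont {n : ℕ} : Continuous (EE (n := n)) := by
  refine continuous_pi fun b => ?_
  have h : Continuous fun w : Co n → ℝ => (w (b, 0), w (b, 1)) := by fun_prop
  exact phi_cont.comp h

/-- rescaled grid points -/
noncomputable def sc {n : ℕ} (N : ℤ) (p : Pt n) : Co n → ℝ := fun c => (p c : ℝ) / N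

theorem emb_A {n : ℕ} (N : ℤ) (hN : N ≠ 0) (b : Fin n) (p : Pt n) :
    EE (sc N (actA N b p)) = EE (sc N p) := by
  have hN' : (N : ℝ) ≠ 0 := by exact_mod_cast hN
  funext j
  unfold EE sc actA
  by_cases h : j = b
  · subst h
    rw [if_pos rfl, if_neg (by simp), if_pos rfl]
    push_cast
    rw [add_div, div_self hN', neg_div, phi_glide]
  · rw [if_neg (by simp [h]), if_neg (by simp [h]), if_neg (by simp [h]), if_neg (by simp [h])]

theorem emb_B {n : ℕ} (N : ℤ) (hN : N ≠ 0) (b : Fin n) (p : Pt n) :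
    EE (sc N (actB N b p)) = flip b (EE (sc N p)) := by
  have hN' : (N : ℝ) ≠ 0 := by exact_mod_cast hN
  funext j
  unfold flip
  by_cases h : j = b
  · subst h
    rw [Function.update_self]
    unfold EE sc actB
    rw [if_neg (by simp), if_pos rfl]
    push_cast
    rw [add_div, div_self hN', phi_anti]
  · rw [Function.update_of_ne h]
    unfold EE sc actB
    rw [if_neg (by simp [h]), if_neg (by simp [h])]

theorem emb_S (N : ℤ) (p : Pt 2) :
    EE (sc N (swM p)) = fun j => EE (sc N p) (Equiv.swap 0 1 j) := by
  funext j
  rfl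

theorem lower_core {n m : ℕ} (U : Fin m → Set (Fin n → RP 2)) (hc : (⋃ i, U i) = Set.univ)
    (G : ℕ → (Fin n → Sph 2) → ZMod 2)
    (hG : ∀ (i : Fin m) r, IsOpen {y | (fun j => pr (y j)) ∈ U i ∧ G i y = r}) :
    ∃ M : ℕ, 0 < M ∧ ∀ Ix : Idx n M, ∃ i < m,
      G i (EE (sc (2 * M) (vert Ix i))) = G i (EE (sc (2 * M) (vert Ix (i + 1)))) := by
  let O : Fin m × ZMod 2 → Set (Co n → ℝ) := fun q =>
    EE ⁻¹' {y | (fun j => pr (y j)) ∈ U q.1 ∧ G q.1 y = q.2}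
  have hO : ∀ q, IsOpen (O q) := fun q => (hG q.1 q.2).preimage EE_cont
  have hK : IsCompact (Set.Icc (0 : Co n → ℝ) 1) := isCompact_Icc
  have hcov : Set.Icc (0 : Co n → ℝ) 1 ⊆ ⋃ q, O q := by
    intro w _
    have : (fun j => pr (EE w j)) ∈ ⋃ i, U i := by rw [hc]; trivial
    obtain ⟨i, hi⟩ := Set.mem_iUnion.1 this
    exact Set.mem_iUnion.2 ⟨(i, G i (EE w)), hi, rfl⟩
  obtain ⟨δ, hδ, hL⟩ := lebesgue_number_lemma_of_metric hK hO hcov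
  obtain ⟨K, hK'⟩ := exists_nat_gt (1 / δ)
  refine ⟨K + 1, Nat.succ_pos _, fun Ix => ?_⟩
  set N : ℤ := 2 * ((K + 1 : ℕ) : ℤ) with hNdef
  have hNr : (N : ℝ) = 2 * (K + 1) := by rw [hNdef]; push_cast; ring
  have hNpos : (0 : ℝ) < N := by rw [hNr]; positivity
  have h1N : 1 / (N : ℝ) < δ := by
    rw [div_lt_iff₀ hNpos, hNr]
    rw [div_lt_iff₀ hδ] at hK'
    nlinarith
  have hmem : sc N (vert Ix 0) ∈ Set.Icc (0 : Co n → ℝ) 1 := by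
    constructor
    · intro c
      simp only [sc, vert, Pi.zero_apply]
      apply div_nonneg _ hNpos.le
      rw [if_neg (Nat.not_lt_zero _), add_zero]
      exact_mod_cast Nat.zero_le _
    · intro c
      simp only [sc, vert, Pi.one_apply]
      rw [div_le_one hNpos, hNr]
      have := ZMod.val_lt (Ix.1 c)
      have : ((Ix.1 c).val : ℝ) ≤ K + 1 := by exact_mod_cast this.le
      rw [if_neg (Nat.not_lt_zero _), add_zero, Int.cast_mul, Int.cast_natCast, Int.cast_ofNat]
      linarith
  have hnear : ∀ k, sc N (vert Ix k) ∈ Metric.ball (sc N (vert Ix 0)) δ := by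
    intro k
    rw [Metric.mem_ball]
    refine lt_of_le_of_lt ?_ h1N
    rw [dist_pi_le_iff (by positivity)]
    intro c
    rw [Real.dist_eq]
    simp only [sc, vert]
    rw [← sub_div, abs_div, abs_of_pos hNpos]
    apply div_le_div_of_nonneg_right _ hNpos.le
    rcases Int.units_eq_one_or (Ix.2.1 c) with h | h <;> rw [h] <;> split_ifs <;> simp
  obtain ⟨q, hq⟩ := hL _ hmem
  exact ⟨q.1, q.1.2, by rw [(hq (hnear _)).2, (hq (hnear _)).2]⟩

/-- partner index -/
def qi (i : ℕ) : ℕ := if i < 3 then 1 else if i < 6 then 2 else i / 2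

theorem sum_tau {n : ℕ} (C : Finset (Fin n)) (c : Fin n) (y : Fin n → Sph 2) :
    ∑ b ∈ C, tauS (flip c y b) = ∑ b ∈ C, tauS (y b) + if c ∈ C then 1 else 0 := by
  rw [← Finset.sum_ite_eq' C c (fun _ => (1 : ZMod 2)), ← Finset.sum_add_distrib]
  apply Finset.sum_congr rfl
  intro b _
  unfold flip
  by_cases h : b = c
  · subst h; rw [Function.update_self, tauS_neg, if_pos rfl]
  · rw [Function.update_of_ne h, if_neg h, add_zero]

theorem lower_big {n m : ℕ} (hn : 3 ≤ n) (hm : m ≤ 2 * n) : ¬ HasSymPlanners (RP 2) n m := by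
  rintro ⟨U, hU, hc, hinv, hs⟩
  have hG : ∀ i : ℕ, ∃ g : (Fin n → Sph 2) → ZMod 2,
      (∀ c y, g (flip c y) = g y + if c ∈ CC n (by omega) i then 1 else 0) ∧
      (∀ h : i < m, ∀ r, IsOpen {y | (fun j => pr (y j)) ∈ U ⟨i, h⟩ ∧ g y = r}) := by
    intro i
    by_cases h : i < m
    · have hq : qi i < n ∧ qi i ≠ 0 := by unfold qi; split_ifs <;> omega
      obtain ⟨s, s0, s1, s2⟩ := hs ⟨i, h⟩
      obtain ⟨g, g1, g2, -⟩ := sign_exists (U ⟨i, h⟩) (hU _) (hinv _) s s0 s1 s2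
        ⟨0, by omega⟩ ⟨qi i, hq.1⟩ (fun e => hq.2 (Fin.ext_iff.1 e).symm)
      refine ⟨g, fun c y => ?_, fun _ => g2⟩
      rw [g1]
      congr 1
      simp [CC, Fin.ext_iff, qi]
    · exact ⟨fun y => ∑ b ∈ CC n (by omega) i, tauS (y b), fun c y => sum_tau _ c y,
        fun h' => absurd h' h⟩
  choose G G1 G2 using hG
  obtain ⟨M, hM, hIx⟩ := lower_core U hc G (fun i => G2 i i.2)
  have : NeZero M := ⟨hM.ne'⟩
  have hN : (2 * M : ℤ) ≠ 0 := by omega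
  obtain ⟨Ix, h⟩ := grid_big (M := M) hn (fun i p => G i (EE (sc (2 * M) p)))
    (fun i b p => by simp only [emb_A _ hN]) (fun i b p => by simp only [emb_B _ hN, G1])
  obtain ⟨i, hi, e⟩ := hIx Ix
  exact h i (by omega) e

theorem lower_two {m : ℕ} (hm : m ≤ 2 * 2) : ¬ HasSymPlanners (RP 2) 2 m := by
  rintro ⟨U, hU, hc, hinv, hs⟩
  have hG : ∀ i : ℕ, ∃ g : (Fin 2 → Sph 2) → ZMod 2,
      (∀ c y, g (flip c y) = g y + 1) ∧
      (∀ y, g (fun j => y (Equiv.swap 0 1 j)) = g y) ∧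
      (∀ h : i < m, ∀ r, IsOpen {y | (fun j => pr (y j)) ∈ U ⟨i, h⟩ ∧ g y = r}) := by
    intro i
    by_cases h : i < m
    · obtain ⟨s, s0, s1, s2⟩ := hs ⟨i, h⟩
      obtain ⟨g, g1, g2, g3⟩ := sign_exists (U ⟨i, h⟩) (hU _) (hinv _) s s0 s1 s2
        0 1 (by decide)
      refine ⟨g, fun c y => ?_, g3, fun _ => g2⟩
      rw [g1, if_pos (by revert c; decide)]
    · refine ⟨fun y => ∑ b, tauS (y b), fun c y => ?_, fun y => ?_, fun h' => absurd h' h⟩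
      · beta_reduce
        rw [sum_tau, if_pos (Finset.mem_univ _)]
      · exact Equiv.sum_comp (Equiv.swap 0 1) (fun j => tauS (y j))
  choose G G1 G3 G2 using hG
  obtain ⟨M, hM, hIx⟩ := lower_core U hc G (fun i => G2 i i.2)
  have : NeZero M := ⟨hM.ne'⟩
  have hN : (2 * M : ℤ) ≠ 0 := by omega
  obtain ⟨Ix, h⟩ := grid_two (M := M) (fun i p => G i (EE (sc (2 * M) p)))
    (fun i b p => by simp only [emb_A _ hN]) (fun i b p => by simp only [emb_B _ hN, G1])
    (fun i p => by simp only [emb_S, G3])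
  obtain ⟨i, hi, e⟩ := hIx Ix
  exact h i (by omega) e

theorem lower {n m : ℕ} (hn : 2 ≤ n) (h : HasSymPlanners (RP 2) n m) : 2 * n + 1 ≤ m := by
  by_contra hm
  rcases eq_or_lt_of_le hn with e | e
  · subst e
    exact lower_two (by omega) h
  · exact lower_big e (by omega) h
end TCTop

open unitInterval
namespace TCTop
open Topology

/-- ambient space -/
abbrev E3 := EuclideanSpace ℝ (Fin 3)

/-- the squared coordinate times representative, well defined on the projective plane -/
noncomputable def rep (k : Fin 3) (x : RP 2) : E3 :=
  Quotient.lift (s := antipodalSetoid 2) (fun y : Sph 2 => ((y : E3) k) • (y : E3)) (by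
    rintro a b (h | h)
    · simp only [h]
    · simp only [h]; simp) x

theorem rep_pr (k : Fin 3) (y : Sph 2) : rep k (pr y) = ((y : E3) k) • (y : E3) := rfl

theorem rep_cont (k : Fin 3) : Continuous (rep k) := by
  rw [pr_quot.continuous_iff]
  change Continuous fun y : Sph 2 => ((y : E3) k) • (y : E3)
  fun_prop

/-- squared coordinate -/
noncomputable def P (k : Fin 3) (x : RP 2) : ℝ := rep k x k

theorem P_pr (k : Fin 3) (y : Sph 2) : P k (pr y) = ((y : E3) k) ^ 2 := by
  rw [P, rep_pr]; simp [sq]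

theorem P_cont (k : Fin 3) : Continuous (P k) := by
  have := rep_cont k
  unfold P
  fun_prop

theorem P_nonneg (k : Fin 3) (x : RP 2) : 0 ≤ P k x := by
  obtain ⟨y, rfl⟩ := pr_surj x
  rw [P_pr]; positivity

theorem P_exists (x : RP 2) : ∃ k, P k x ≠ 0 := by
  by_contra! h
  obtain ⟨y, rfl⟩ := pr_surj x
  have h0 : (y : E3) = 0 := by
    ext k
    have := h k
    rw [P_pr] at this
    simpa using this
  have := y.2
  rw [h0] at this
  simp at this

/-- normalization -/
noncomputable def nrm (w : {w : E3 // w ≠ 0}) : Sph 2 :=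
  ⟨‖w.1‖⁻¹ • w.1, by
    rw [mem_sphere_zero_iff_norm, norm_smul, norm_inv, norm_norm,
      inv_mul_cancel₀ (norm_ne_zero_iff.2 w.2)]⟩

theorem nrm_cont : Continuous nrm := by
  unfold nrm
  refine Continuous.subtype_mk ?_ _
  refine Continuous.smul (Continuous.inv₀ (continuous_norm.comp continuous_subtype_val) ?_) continuous_subtype_val
  intro w
  exact norm_ne_zero_iff.2 w.2

/-- straight segment -/
noncomputable def seg (k : Fin 3) (x : RP 2) (t : I) : E3 :=
  (1 - (t : ℝ)) • !₂[1, 1, 1] + (t : ℝ) • rep k x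

theorem seg_ne (k : Fin 3) (x : RP 2) (h : 0 < P k x) (t : I) : seg k x t ≠ 0 := by
  intro e
  have e' : seg k x t k = 0 := by rw [e]; rfl
  have hv : (![(1 : ℝ), 1, 1] : Fin 3 → ℝ) k = 1 := by fin_cases k <;> rfl
  simp only [seg, PiLp.add_apply, PiLp.smul_apply, smul_eq_mul, hv] at e'
  change (1 - (t : ℝ)) * 1 + t * P k x = 0 at e'
  have h0 := t.2.1
  have h1 := t.2.2
  rcases eq_or_lt_of_le h0 with h2 | h2
  · rw [← h2] at e'; norm_num at e'
  · nlinarith [mul_pos h2 h]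

/-- the path family on the locus where one coordinate does not vanish -/
noncomputable def gam0 (k : Fin 3) : C({x : RP 2 // 0 < P k x}, C(I, RP 2)) :=
  ContinuousMap.curry ⟨fun q => pr (nrm ⟨seg k q.1.1 q.2, seg_ne k _ q.1.2 _⟩), by
    refine pr_cont.comp (nrm_cont.comp (Continuous.subtype_mk ?_ _))
    unfold seg
    have h := (rep_cont k).comp
      (continuous_subtype_val.comp (continuous_fst (X := {x : RP 2 // 0 < P k x}) (Y := I)))
    have h2 : Continuous fun q : {x : RP 2 // 0 < P k x} × I => ((q.2 : I) : ℝ) := by fun_prop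
    exact ((continuous_const.sub h2).smul continuous_const).add (h2.smul h)⟩

theorem gam0_apply (k : Fin 3) (x : {x : RP 2 // 0 < P k x}) (t : I) :
    gam0 k x t = pr (nrm ⟨seg k x.1 t, seg_ne k _ x.2 _⟩) := rfl

theorem v_ne : (!₂[1, 1, 1] : E3) ≠ 0 := by
  intro e
  have : (!₂[(1 : ℝ), 1, 1] : E3) 0 = 0 := by rw [e]; rfl
  simp at this

theorem gam0_zero (k : Fin 3) (x : {x : RP 2 // 0 < P k x}) :
    gam0 k x 0 = pr (nrm ⟨!₂[1, 1, 1], v_ne⟩) := by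
  rw [gam0_apply]
  congr 3
  simp [seg]

theorem gam0_one (k : Fin 3) (x : {x : RP 2 // 0 < P k x}) : gam0 k x 1 = x.1 := by
  obtain ⟨x, hx⟩ := x
  obtain ⟨y, rfl⟩ := pr_surj x
  rw [gam0_apply, pr_eq]
  have hs : seg k (pr y) 1 = ((y : E3) k) • (y : E3) := by
    simp [seg, rep_pr]
  have hy : ‖(y : E3)‖ = 1 := by simp
  have hne : (y : E3) k ≠ 0 := by
    intro e
    rw [P_pr, e] at hx
    norm_num at hx
  rw [Subtype.ext_iff, Subtype.ext_iff]
  change ‖seg k (pr y) 1‖⁻¹ • seg k (pr y) 1 = (y : E3) ∨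
    ‖seg k (pr y) 1‖⁻¹ • seg k (pr y) 1 = -(y : E3)
  rw [hs, norm_smul, hy, mul_one, Real.norm_eq_abs, smul_smul]
  rcases lt_or_gt_of_ne hne with h | h
  · right
    rw [abs_of_neg h, inv_neg, neg_mul, inv_mul_cancel₀ hne, neg_one_smul]
  · left
    rw [abs_of_pos h, inv_mul_cancel₀ hne, one_smul]

open Classical in
/-- total version -/
noncomputable def gam (k : Fin 3) (x : RP 2) : C(I, RP 2) :=
  if h : 0 < P k x then gam0 k ⟨x, h⟩ else ContinuousMap.const _ x

theorem gam_pos {k : Fin 3} {x : RP 2} (h : 0 < P k x) : gam k x = gam0 k ⟨x, h⟩ := dif_pos h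

theorem gam_cont {k : Fin 3} {x : RP 2} (h : 0 < P k x) : ContinuousAt (gam k) x := by
  have ho : IsOpen {x | 0 < P k x} := isOpen_lt continuous_const (P_cont k)
  have hc : ContinuousOn (gam k) {x | 0 < P k x} := by
    rw [continuousOn_iff_continuous_domRestrict]
    have : Set.domRestrict {x | 0 < P k x} (gam k) = fun z => gam0 k ⟨z.1, z.2⟩ := by
      funext z
      exact gam_pos z.2
    rw [this]
    exact (gam0 k).continuous.comp (continuous_subtype_val.subtype_mk _)
  exact hc.continuousAt (ho.mem_nhds h)

/-- the monomials -/
noncomputable def mon {n : ℕ} (d : Fin n → Fin 3) (x : Fin n → RP 2) : ℝ := ∏ j, P (d j) (x j)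

theorem mon_cont {n : ℕ} (d : Fin n → Fin 3) : Continuous (mon d) :=
  continuous_finsetProd _ fun j _ => (P_cont _).comp (continuous_apply j)

/-- degree -/
def deg {n : ℕ} (d : Fin n → Fin 3) : ℕ := ∑ j, (d j : ℕ)

/-- dominance region of a monomial -/
def W {n : ℕ} (d : Fin n → Fin 3) : Set (Fin n → RP 2) :=
  {x | 0 < mon d x ∧ ∀ e, deg e = deg d → e ≠ d → mon e x < mon d x}

theorem W_open {n : ℕ} (d : Fin n → Fin 3) : IsOpen (W d) := by
  have : W d = {x | 0 < mon d x} ∩ ⋂ e, {x | deg e = deg d → e ≠ d → mon e x < mon d x} := by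
    ext x; simp [W]
  rw [this]
  refine (isOpen_lt continuous_const (mon_cont d)).inter (isOpen_iInter_of_finite fun e => ?_)
  by_cases h1 : deg e = deg d
  · by_cases h2 : e ≠ d
    · simpa [h1, h2] using isOpen_lt (mon_cont e) (mon_cont d)
    · simp [h2]
  · simp [h1]

theorem W_unique {n : ℕ} {d e : Fin n → Fin 3} (h : deg d = deg e) {x : Fin n → RP 2}
    (hd : x ∈ W d) (he : x ∈ W e) : d = e := by
  by_contra hne
  have h1 := he.2 d h hne
  have h2 := hd.2 e h.symm (Ne.symm hne)
  exact lt_asymm h1 h2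

theorem W_pos {n : ℕ} {d : Fin n → Fin 3} {x : Fin n → RP 2} (hd : x ∈ W d) (j : Fin n) :
    0 < P (d j) (x j) := by
  refine lt_of_le_of_ne (P_nonneg _ _) fun e => ?_
  have : mon d x = 0 := Finset.prod_eq_zero (Finset.mem_univ j) e.symm
  exact hd.1.ne' this

theorem mon_perm {n : ℕ} (sg : Equiv.Perm (Fin n)) (d : Fin n → Fin 3) (x : Fin n → RP 2) :
    mon (permTuple sg d) (permTuple sg x) = mon d x :=
  Equiv.prod_comp sg fun j => P (d j) (x j)

theorem deg_perm {n : ℕ} (sg : Equiv.Perm (Fin n)) (d : Fin n → Fin 3) :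
    deg (permTuple sg d) = deg d :=
  Equiv.sum_comp sg fun j => (d j : ℕ)

theorem perm_symm {X : Type*} {n : ℕ} (sg : Equiv.Perm (Fin n)) (d : Fin n → X) :
    permTuple sg (permTuple sg.symm d) = d := by
  funext j; simp [permTuple]

theorem W_perm {n : ℕ} (sg : Equiv.Perm (Fin n)) {d : Fin n → Fin 3} {x : Fin n → RP 2}
    (h : x ∈ W d) : permTuple sg x ∈ W (permTuple sg d) := by
  refine ⟨by rw [mon_perm]; exact h.1, fun e h1 h2 => ?_⟩
  rw [deg_perm] at h1
  rw [mon_perm, ← perm_symm sg e, mon_perm]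
  apply h.2
  · rw [deg_perm, h1]
  · intro h3
    apply h2
    rw [← h3, perm_symm]

theorem W_cover {n : ℕ} (x : Fin n → RP 2) : ∃ d, x ∈ W d := by
  classical
  have : ∀ j, ∃ k, P k (x j) ≠ 0 ∧ ∀ l, k < l → P l (x j) = 0 := by
    intro j
    have hne : (Finset.univ.filter fun k => P k (x j) ≠ 0).Nonempty := by
      obtain ⟨k, hk⟩ := P_exists (x j)
      exact ⟨k, by simpa using hk⟩
    refine ⟨Finset.max' _ hne, ?_, fun l hl => ?_⟩
    · have := Finset.max'_mem _ hne
      exact (Finset.mem_filter.1 this).2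
    · by_contra h
      have := Finset.le_max' (Finset.univ.filter fun k => P k (x j) ≠ 0) l (by simpa using h)
      exact absurd hl (not_lt.2 this)
  choose d h1 h2 using this
  have hpos : 0 < mon d x :=
    Finset.prod_pos fun j _ => lt_of_le_of_ne (P_nonneg _ _) (h1 j).symm
  refine ⟨d, hpos, fun e he hne => ?_⟩
  have : ∃ j, d j < e j := by
    by_contra! hle
    apply hne
    have := (Finset.sum_eq_sum_iff_of_le (s := Finset.univ) (f := fun j => (e j : ℕ))
      (g := fun j => (d j : ℕ)) (fun j _ => hle j)).1 he
    funext j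
    exact Fin.ext (this j (Finset.mem_univ j))
  obtain ⟨j, hj⟩ := this
  have h0 : mon e x = 0 := Finset.prod_eq_zero (Finset.mem_univ j) (h2 j _ hj)
  rw [h0]; exact hpos

theorem deg_le {n : ℕ} (d : Fin n → Fin 3) : deg d < 2 * n + 1 := by
  have : deg d ≤ ∑ _j : Fin n, 2 := Finset.sum_le_sum fun j _ => by
    have := (d j).2
    omega
  simp at this
  omega

theorem upper (n : ℕ) : HasSymPlanners (RP 2) n (2 * n + 1) := by
  classical
  let U : Fin (2 * n + 1) → Set (Fin n → RP 2) := fun k => {x | ∃ d, deg d = k ∧ x ∈ W d}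
  have hUo : ∀ k, IsOpen (U k) := by
    intro k
    have : U k = ⋃ d : Fin n → Fin 3, ⋃ _ : deg d = k, W d := by
      ext x; simp [U]
    rw [this]
    exact isOpen_iUnion fun d => isOpen_iUnion fun _ => W_open d
  refine ⟨U, hUo, ?_, ?_, ?_⟩
  · rw [Set.eq_univ_iff_forall]
    intro x
    obtain ⟨d, hd⟩ := W_cover x
    exact Set.mem_iUnion.2 ⟨⟨deg d, deg_le d⟩, d, rfl, hd⟩
  · rintro k sg x ⟨d, h1, h2⟩
    exact ⟨permTuple sg d, by rw [deg_perm, h1], W_perm sg h2⟩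
  · intro k
    have hU : ∀ x : U k, ∃ d, deg d = k ∧ (x : Fin n → RP 2) ∈ W d := fun x => x.2
    choose D D1 D2 using hU
    have hD : ∀ (x : U k) d, deg d = k → (x : Fin n → RP 2) ∈ W d → D x = d :=
      fun x d h1 h2 => W_unique (by rw [D1, h1]) (D2 x) h2
    refine ⟨⟨fun x j => gam (D x j) (x.1 j), ?_⟩, ?_, ?_, ?_⟩
    · rw [continuous_iff_continuousAt]
      intro x
      have hev : (fun z : U k => fun j => gam (D x j) (z.1 j)) =ᶠ[𝓝 x]
          fun z : U k => fun j => gam (D z j) (z.1 j) := by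
        have : ∀ᶠ z : U k in 𝓝 x, (z : Fin n → RP 2) ∈ W (D x) :=
          continuous_subtype_val.continuousAt.eventually ((W_open _).mem_nhds (D2 x))
        filter_upwards [this] with z hz
        rw [hD z _ (D1 x) hz]
      refine ContinuousAt.congr ?_ hev
      refine continuousAt_pi.2 fun j => ?_
      have h1 : ContinuousAt (fun z : U k => z.1 j) x :=
        ((continuous_apply j).comp continuous_subtype_val).continuousAt
      exact ContinuousAt.comp (f := fun z : U k => z.1 j) (gam_cont (W_pos (D2 x) j)) h1
    · intro x j j'
      change gam (D x j) (x.1 j) 0 = gam (D x j') (x.1 j') 0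
      rw [gam_pos (W_pos (D2 x) j), gam_pos (W_pos (D2 x) j'), gam0_zero, gam0_zero]
    · intro x j
      change gam (D x j) (x.1 j) 1 = _
      rw [gam_pos (W_pos (D2 x) j), gam0_one]
    · intro x sg hx
      have : D ⟨permTuple sg (x : Fin n → RP 2), hx⟩ = permTuple sg (D x) :=
        hD _ _ (by rw [deg_perm, D1]) (W_perm sg (D2 x))
      funext j
      change gam (D ⟨permTuple sg (x : Fin n → RP 2), hx⟩ j) _ = _
      rw [this]
      rfl
end TCTop

/-- For every `n ≥ 2`, `TC^Σ_n(ℝP^2) = 2n + 1`. -/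
theorem TCsym_projective_plane (n : ℕ) (hn : 2 ≤ n) :
    TCsym (RP 2) n = ((2 * n + 1 : ℕ) : ℕ∞) := by
  unfold TCsym
  apply le_antisymm
  · exact sInf_le ⟨_, rfl, TCTop.upper n⟩
  · apply le_sInf
    rintro k ⟨m, rfl, hm⟩
    exact_mod_cast TCTop.lower hn hm
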